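/- arXiv:cs/0408014 — 2 statements merged into one kernel-verified Lean document; each statement's English description precedes it below -/
import Mathlib

section
/- There is no algorithm for the implication problem of regular graph constraints over the class of acyclic heaps: encoding finite graphs (graphs whose node set is Fin n for some n) as natural numbers via a standard encoding, the set of pairs of graphs ⟨G1, G2⟩ such that G1 ⇝_A G2 is not a computable (decidable) set, where A is the class of all acyclic heaps. -/
universe u v w

/-- A (pre)graph: a node set `V` inside an ambient type, two edge relations
`s1` and `s2`, and distinguished constants `null` and `root`. -/
structure PreGraph (α : Type u) where
  V : Set α
  s1 : α → α → Prop
  s2 : α → α → Prop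
  null : α
  root : α

namespace PreGraph

/-- `G` is a graph: `V` is finite, `root` and `null` are distinct nodes of `V`,
edges lie within `V`, and `⟨null, x⟩ ∈ sᵢ` iff `x = null`. -/
def IsGraph {α : Type u} (G : PreGraph α) : Prop :=
  G.V.Finite ∧
  G.null ∈ G.V ∧ G.root ∈ G.V ∧ G.root ≠ G.null ∧
  (∀ x y, G.s1 x y → x ∈ G.V ∧ y ∈ G.V) ∧
  (∀ x y, G.s2 x y → x ∈ G.V ∧ y ∈ G.V) ∧
  (∀ x, G.s1 G.null x ↔ x = G.null) ∧
  (∀ x, G.s2 G.null x ↔ x = G.null)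

/-- `h` is a homomorphism from `G` to `G'`. -/
def IsHom {α : Type u} {β : Type v} (G : PreGraph α) (G' : PreGraph β) (h : α → β) : Prop :=
  (∀ x ∈ G.V, h x ∈ G'.V) ∧
  (∀ x y, G.s1 x y → G'.s1 (h x) (h y)) ∧
  (∀ x y, G.s2 x y → G'.s2 (h x) (h y)) ∧
  (∀ x ∈ G.V, (h x = G'.root ↔ x = G.root)) ∧
  (∀ x ∈ G.V, (h x = G'.null ↔ x = G.null))

/-- `G → G'` : there exists a homomorphism from `G` to `G'`. -/
def Maps {α : Type u} {β : Type v} (G : PreGraph α) (G' : PreGraph β) : Prop :=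
  ∃ h : α → β, IsHom G G' h

/-- An edge of `G` (either an `s1`- or an `s2`-edge). -/
def edge {α : Type u} (G : PreGraph α) (x y : α) : Prop := G.s1 x y ∨ G.s2 x y

/-- `G` is a heap: a graph in which `s1` and `s2` are total functions on `V`
and every node other than `null` is reachable from `root`. -/
def IsHeap {α : Type u} (G : PreGraph α) : Prop :=
  IsGraph G ∧
  (∀ x ∈ G.V, ∃! y, G.s1 x y) ∧
  (∀ x ∈ G.V, ∃! y, G.s2 x y) ∧
  (∀ x ∈ G.V, x ≠ G.null → Relation.ReflTransGen G.edge G.root x)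

end PreGraph

/-- An acyclic heap: a heap with no directed cycle through a node other than
`null`. -/
def IsAcyclicHeap {α : Type u} (G : PreGraph α) : Prop :=
  PreGraph.IsHeap G ∧ ∀ x, x ≠ G.null → ¬ Relation.TransGen G.edge x x

/-- `G1 ⇝_A G2` : implication over the class of all acyclic heaps. -/
def AcyclicHeapImplies {α : Type u} {β : Type v} (G1 : PreGraph α) (G2 : PreGraph β) : Prop :=
  ∀ (γ : Type) (H : PreGraph γ), IsAcyclicHeap H →
    PreGraph.Maps H G1 → PreGraph.Maps H G2

/-- A finite graph whose node set is `Fin n`, with concrete (`Bool`-valued)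
edge relations, so that it can be encoded as a natural number. -/
structure FinGraph where
  n : ℕ
  s1 : Fin n → Fin n → Bool
  s2 : Fin n → Fin n → Bool
  null : Fin n
  root : Fin n
  root_ne_null : root ≠ null
  null_s1 : ∀ x, s1 null x = true ↔ x = null
  null_s2 : ∀ x, s2 null x = true ↔ x = null

/-- The graph (with node set `Fin n`) determined by a `FinGraph`. -/
def FinGraph.toPreGraph (G : FinGraph) : PreGraph (Fin G.n) where
  V := Set.univ
  s1 := fun x y => G.s1 x y = true
  s2 := fun x y => G.s2 x y = true
  null := G.null
  root := G.root

/-- The data `⟨n, s1, s2, null, root⟩` of a finite graph. -/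
abbrev GraphData : Type :=
  Σ n : ℕ, (Fin n → Fin n → Bool) × (Fin n → Fin n → Bool) × Fin n × Fin n

/-- A standard encoding of finite graphs as natural numbers, via the standard
encoding of the data `⟨n, s1, s2, null, root⟩`. -/
def FinGraph.encode (G : FinGraph) : ℕ :=
  Encodable.encode (⟨G.n, G.s1, G.s2, G.null, G.root⟩ : GraphData)

/-- A standard encoding of pairs of finite graphs as natural numbers. -/
def encodePair (G1 G2 : FinGraph) : ℕ := Nat.pair G1.encode G2.encode
/-! ### Encoding and computability -/

theorem encode_finPi {n : ℕ} {α : Type} [Encodable α] (f : Fin n → α) :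
    @Encodable.encode _ (Encodable.finPi n (fun _ => α)) f =
      Encodable.encode ((List.finRange n).map fun i => Nat.pair i.val (Encodable.encode (f i))) := by
  have key : ∀ l : List (Fin n), Encodable.encode (l.map fun i => (⟨i, f i⟩ : Σ _ : Fin n, α)) =
      Encodable.encode (l.map fun i => Nat.pair i.val (Encodable.encode (f i))) := by
    intro l
    induction l with
    | nil => rfl
    | cons a l ih =>
      simp only [List.map_cons, Encodable.encode_list_cons, ih]
      rfl
  rw [← key, ← List.ofFn_eq_map]
  exact congrArg Encodable.encode (List.Vector.toList_ofFn (fun i => (⟨i, f i⟩ : Σ _ : Fin n, α)))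

def encMat (N : ℕ) (s : ℕ → ℕ → Bool) : ℕ :=
  Encodable.encode ((List.range N).map fun i => Nat.pair i
    (Encodable.encode ((List.range N).map fun j => Nat.pair j (Encodable.encode (s i j)))))

theorem finRange_map_val {α : Type} (n : ℕ) (g : ℕ → α) :
    (List.finRange n).map (fun i => g i.val) = (List.range n).map g := by
  rw [← List.map_coe_finRange_eq_range, List.map_map]; rfl

theorem encode_mat (N : ℕ) (s : ℕ → ℕ → Bool) :
    @Encodable.encode (Fin N → Fin N → Bool) inferInstance (fun i j => s i.val j.val)
      = encMat N s := by
  refine (encode_finPi _).trans ?_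
  unfold encMat
  rw [← finRange_map_val]
  congr 2
  funext i
  congr 1
  refine (encode_finPi _).trans ?_
  rw [← finRange_map_val]

theorem encMat_primrec {α : Type} [Primcodable α] (N : α → ℕ) (hN : Primrec N)
    (s : α → ℕ → ℕ → Bool)
    (hs : Primrec fun p : (α × ℕ) × ℕ => s p.1.1 p.1.2 p.2) :
    Primrec fun a => encMat (N a) (s a) := by
  unfold encMat
  refine Primrec.encode.comp (Primrec.list_map (Primrec.list_range.comp hN) ?_)
  refine Primrec₂.natPair.comp Primrec.snd (Primrec.encode.comp
    (Primrec.list_map (Primrec.list_range.comp (hN.comp Primrec.fst)) ?_))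
  exact Primrec₂.natPair.comp Primrec.snd (Primrec.encode.comp hs)

theorem primrec_min {σ : Type} [Primcodable σ] [Inhabited σ] (g : ℕ → σ) (b : ℕ) :
    Primrec fun x => g (min x b) := by
  have h1 : Primrec fun x : ℕ => ((List.range (b+1)).map g).getD (min x b) default :=
    (Primrec.list_getD default).comp (Primrec.const _) (Primrec.nat_min.comp Primrec.id (Primrec.const b))
  refine h1.of_eq fun x => ?_
  have : min x b < b + 1 := by omega
  simp [List.getD, this]

theorem primrec_tab (g : ℕ → ℕ → Bool) (b : ℕ) :
    Primrec fun p : ℕ × ℕ => g (min p.1 b) (min p.2 b) := by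
  have h1 := primrec_min (fun m => g m.unpair.1 m.unpair.2) (Nat.pair b b)
  have h2 : Primrec fun p : ℕ × ℕ => Nat.pair (min p.1 b) (min p.2 b) :=
    Primrec₂.natPair.comp (Primrec.nat_min.comp Primrec.fst (Primrec.const b))
      (Primrec.nat_min.comp Primrec.snd (Primrec.const b))
  refine (h1.comp h2).of_eq fun p => ?_
  have : Nat.pair (min p.1 b) (min p.2 b) ≤ Nat.pair b b := by
    have a1 : min p.1 b ≤ b := min_le_right _ _
    have a2 : min p.2 b ≤ b := min_le_right _ _
    exact (StrictMono.monotone (fun _ _ h => Nat.pair_lt_pair_left _ h) a1).trans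
      (StrictMono.monotone (fun _ _ h => Nat.pair_lt_pair_right _ h) a2)
  simp [min_eq_left this]

/-- adjacency of the varying graph, on numbers -/
def sg (tb : ℕ → ℕ → Bool) (b : ℕ) (i : Bool) (n x y : ℕ) : Bool :=
  if x < b then tb x (if y < b then y else if y = b + n then b else b + 1)
  else if i = true ∨ x = b then decide (y = 0) else decide (y + 1 = x)

theorem sg_primrec (tb : ℕ → ℕ → Bool) (b : ℕ) (i : Bool) :
    Primrec fun p : (ℕ × ℕ) × ℕ => sg tb b i p.1.1 p.1.2 p.2 := by
  have hn : Primrec fun p : (ℕ × ℕ) × ℕ => p.1.1 := Primrec.fst.comp Primrec.fst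
  have hx : Primrec fun p : (ℕ × ℕ) × ℕ => p.1.2 := Primrec.snd.comp Primrec.fst
  have hy : Primrec fun p : (ℕ × ℕ) × ℕ => p.2 := Primrec.snd
  have hY : Primrec fun p : (ℕ × ℕ) × ℕ =>
      (if p.2 < b then p.2 else if p.2 = b + p.1.1 then b else b + 1) :=
    Primrec.ite (Primrec.nat_lt.comp hy (Primrec.const b)) hy
      (Primrec.ite (Primrec.eq.comp hy (Primrec.nat_add.comp (Primrec.const b) hn))
        (Primrec.const b) (Primrec.const (b+1)))
  have hT := (primrec_tab tb (b+1)).comp (hx.pair hY)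
  have h0 : Primrec fun p : (ℕ × ℕ) × ℕ => decide (p.2 = 0) :=
    (Primrec.eq.comp hy (Primrec.const 0)).decide
  have h1 : Primrec fun p : (ℕ × ℕ) × ℕ => decide (p.2 + 1 = p.1.2) :=
    (Primrec.eq.comp (Primrec.succ.comp hy) hx).decide
  have hc : PrimrecPred fun p : (ℕ × ℕ) × ℕ => (i = true ∨ p.1.2 = b) := by
    cases i
    · exact (Primrec.eq.comp hx (Primrec.const b)).of_eq (by simp)
    · exact (Primrec.eq.comp (Primrec.const 0) (Primrec.const 0)).of_eq (by simp)
  have := Primrec.ite (Primrec.nat_lt.comp hx (Primrec.const b)) hT (Primrec.ite hc h0 h1)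
  refine this.of_eq fun p => ?_
  unfold sg
  split_ifs <;> first | rfl | (dsimp only; congr 1 <;> omega)

/-! ### An undecidable halting set for `ToPartrec` codes -/

theorem exists_hard_code : ∃ c : Turing.ToPartrec.Code,
    ¬ ComputablePred fun n : ℕ => (c.eval [n]).Dom := by
  have hp : Partrec fun n : ℕ =>
      ((Denumerable.ofNat Nat.Partrec.Code n).eval 0) :=
    Nat.Partrec.Code.eval_part.comp (Computable.ofNat _) (Computable.const 0)
  obtain ⟨c, hc⟩ := Turing.ToPartrec.Code.exists_code (Nat.Partrec'.part_iff₁.2 hp)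
  refine ⟨c, fun h => ComputablePred.halting_problem 0 ?_⟩
  have h2 : ComputablePred fun a : Nat.Partrec.Code => (c.eval [Encodable.encode a]).Dom := by
    obtain ⟨d, hd⟩ := h
    exact ⟨inferInstance, (hd.comp Computable.encode).of_eq fun a => by
      congr⟩
  refine h2.of_eq fun a => ?_
  have := hc (Encodable.encode a ::ᵥ List.Vector.nil)
  have e : (Encodable.encode a ::ᵥ List.Vector.nil : List.Vector ℕ 1).1 = [Encodable.encode a] := rfl
  rw [e] at this
  rw [this]
  simp
/-! ### Functional acyclic heaps -/

structure HP where
  X : Type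
  fin : Finite X
  f : Bool → X → X
  null : X
  root : X
  fn : ∀ i, f i null = null
  ne : root ≠ null
  reach : ∀ x, x ≠ null → Relation.ReflTransGen (fun a b => ∃ i, f i a = b) root x
  wf : WellFounded (fun y x => x ≠ null ∧ ∃ i, f i x = y)

/-- colouring of a functional heap by an abstract graph -/
def HomP (P : HP) {β : Type} (adj : Bool → β → β → Prop) (nu ro : β) : Prop :=
  ∃ h : P.X → β, (∀ i x, adj i (h x) (h (P.f i x))) ∧ (∀ x, h x = ro ↔ x = P.root) ∧
    (∀ x, h x = nu ↔ x = P.null)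

def FinGraph.adj (G : FinGraph) (i : Bool) (x y : Fin G.n) : Prop :=
  (if i then G.s2 x y else G.s1 x y) = true

theorem heap_to_HP {γ : Type} (H : PreGraph γ) (hH : IsAcyclicHeap H) :
    ∃ P : HP, ∀ G : FinGraph, PreGraph.Maps H G.toPreGraph ↔ HomP P G.adj G.null G.root := by
  obtain ⟨⟨⟨hfin, hnV, hrV, hne, hs1, hs2, hn1, hn2⟩, ht1, ht2, hr⟩, hac⟩ := hH
  have e1 : ∀ x : H.V, ∃ y : H.V, H.s1 x y := fun x => by
    obtain ⟨y, hy, -⟩ := ht1 x x.2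
    exact ⟨⟨y, (hs1 _ _ hy).2⟩, hy⟩
  have e2 : ∀ x : H.V, ∃ y : H.V, H.s2 x y := fun x => by
    obtain ⟨y, hy, -⟩ := ht2 x x.2
    exact ⟨⟨y, (hs2 _ _ hy).2⟩, hy⟩
  choose f1 hf1 using e1
  choose f2 hf2 using e2
  have u1 : ∀ (x : H.V) y, H.s1 x y → y = f1 x := fun x y h =>
    (ht1 x x.2).unique h (hf1 x)
  have u2 : ∀ (x : H.V) y, H.s2 x y → y = f2 x := fun x y h =>
    (ht2 x x.2).unique h (hf2 x)
  let f : Bool → H.V → H.V := fun i x => if i then f2 x else f1 x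
  have hfe : ∀ i (x : H.V), H.edge x (f i x) := by
    intro i x; cases i
    · exact Or.inl (hf1 x)
    · exact Or.inr (hf2 x)
  have hfin' : Finite H.V := hfin
  let R : H.V → H.V → Prop := fun y x => x.1 ≠ H.null ∧ ∃ i, f i x = y
  have tr : ∀ y x, Relation.TransGen R y x → x.1 ≠ H.null ∧ Relation.TransGen H.edge x.1 y.1 := by
    intro y x h
    induction h with
    | single h =>
      obtain ⟨h0, i, rfl⟩ := h
      exact ⟨h0, .single (hfe _ _)⟩
    | tail _ h ih =>
      obtain ⟨h0, i, rfl⟩ := h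
      exact ⟨h0, Relation.TransGen.head (hfe _ _) ih.2⟩
  have hwf : WellFounded R := by
    have : IsTrans H.V (Relation.TransGen R) := ⟨fun _ _ _ => Relation.TransGen.trans⟩
    have : Std.Irrefl (Relation.TransGen R) := ⟨fun x h => by
      obtain ⟨a, b⟩ := tr _ _ h
      exact hac _ a b⟩
    have w : WellFounded (Relation.TransGen R) := Finite.wellFounded_of_trans_of_irrefl _
    exact Subrelation.wf (fun h => Relation.TransGen.single h) w
  have hreach : ∀ x, Relation.ReflTransGen H.edge H.root x → ∀ hx : x ∈ H.V,
      Relation.ReflTransGen (fun a b => ∃ i, f i a = b) ⟨H.root, hrV⟩ ⟨x, hx⟩ := by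
    intro x h
    induction h with
    | refl => intro hx; exact .refl
    | @tail b c _ h ih =>
      intro hx
      rcases h with h | h
      · have hb := (hs1 _ _ h).1
        refine (ih hb).tail ⟨false, ?_⟩
        exact Subtype.ext (u1 ⟨b, hb⟩ c h).symm
      · have hb := (hs2 _ _ h).1
        refine (ih hb).tail ⟨true, ?_⟩
        exact Subtype.ext (u2 ⟨b, hb⟩ c h).symm
  refine ⟨⟨H.V, hfin, f, ⟨H.null, hnV⟩, ⟨H.root, hrV⟩, ?_, ?_, ?_, ?_⟩, ?_⟩
  · intro i
    cases i
    · exact Subtype.ext ((hn1 _).1 (hf1 ⟨H.null, hnV⟩))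
    · exact Subtype.ext ((hn2 _).1 (hf2 ⟨H.null, hnV⟩))
  · intro h; exact hne (congrArg Subtype.val h)
  · intro x hx
    exact hreach x.1 (hr _ x.2 fun h => hx (Subtype.ext h)) x.2
  · refine Subrelation.wf (r := R) ?_ hwf
    rintro y x ⟨h, h'⟩
    exact ⟨fun e => h (Subtype.ext e), h'⟩
  · intro G
    constructor
    · rintro ⟨h, -, h1, h2, h3, h4⟩
      refine ⟨fun x => h x.1, ?_, ?_, ?_⟩
      · intro i x
        cases i
        · exact h1 _ _ (hf1 x)
        · exact h2 _ _ (hf2 x)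
      · intro x
        exact (h3 x.1 x.2).trans ⟨fun e => Subtype.ext e, fun e => congrArg Subtype.val e⟩
      · intro x
        exact (h4 x.1 x.2).trans ⟨fun e => Subtype.ext e, fun e => congrArg Subtype.val e⟩
    · rintro ⟨h, h1, h3, h4⟩
      classical
      refine ⟨fun x => if hx : x ∈ H.V then h ⟨x, hx⟩ else G.null, ?_, ?_, ?_, ?_, ?_⟩
      · intro x hx; trivial
      · intro x y hxy
        obtain ⟨hx, hy⟩ := hs1 _ _ hxy
        have := h1 false ⟨x, hx⟩
        have e : f false ⟨x, hx⟩ = ⟨y, hy⟩ := Subtype.ext (u1 ⟨x, hx⟩ y hxy).symm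
        simp only [dif_pos hx, dif_pos hy]
        rw [← e]; exact this
      · intro x y hxy
        obtain ⟨hx, hy⟩ := hs2 _ _ hxy
        have := h1 true ⟨x, hx⟩
        have e : f true ⟨x, hx⟩ = ⟨y, hy⟩ := Subtype.ext (u2 ⟨x, hx⟩ y hxy).symm
        simp only [dif_pos hx, dif_pos hy]
        rw [← e]; exact this
      · intro x hx
        simp only [dif_pos hx]
        exact (h3 ⟨x, hx⟩).trans ⟨fun e => congrArg Subtype.val e, fun e => Subtype.ext e⟩
      · intro x hx
        simp only [dif_pos hx]
        exact (h4 ⟨x, hx⟩).trans ⟨fun e => congrArg Subtype.val e, fun e => Subtype.ext e⟩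

theorem HP_to_heap (P : HP) : ∃ H : PreGraph P.X, IsAcyclicHeap H ∧
    ∀ G : FinGraph, PreGraph.Maps H G.toPreGraph ↔ HomP P G.adj G.null G.root := by
  let H : PreGraph P.X := ⟨Set.univ, fun x y => y = P.f false x, fun x y => y = P.f true x,
    P.null, P.root⟩
  have he : ∀ x y, H.edge x y ↔ ∃ i, P.f i x = y := by
    intro x y
    constructor
    · rintro (h | h)
      · exact ⟨false, h.symm⟩
      · exact ⟨true, h.symm⟩
    · rintro ⟨i, rfl⟩
      cases i
      · exact Or.inl rfl
      · exact Or.inr rfl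
  have he' : H.edge = (fun a b => ∃ i, P.f i a = b) := by
    funext x y; exact propext (he x y)
  refine ⟨H, ⟨⟨⟨?_, trivial, trivial, P.ne, ?_, ?_, ?_, ?_⟩, ?_, ?_, ?_⟩, ?_⟩, ?_⟩
  · have := P.fin; exact Set.toFinite _
  · intros; exact ⟨trivial, trivial⟩
  · intros; exact ⟨trivial, trivial⟩
  · intro x; show x = P.f false P.null ↔ x = P.null; rw [P.fn]
  · intro x; show x = P.f true P.null ↔ x = P.null; rw [P.fn]
  · intro x _; exact ⟨_, rfl, fun y h => h⟩
  · intro x _; exact ⟨_, rfl, fun y h => h⟩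
  · intro x _ hx; rw [he']; exact P.reach x hx
  · -- acyclicity
    rw [he']
    have hnull : ∀ x y, Relation.TransGen (fun a b => ∃ i, P.f i a = b) x y → x = P.null →
        y = P.null := by
      intro x y h
      induction h with
      | single h => rintro rfl; obtain ⟨i, rfl⟩ := h; exact P.fn i
      | tail _ h ih => intro hx; obtain ⟨i, rfl⟩ := h; rw [ih hx]; exact P.fn i
    have key : ∀ x y, Relation.TransGen (fun a b => ∃ i, P.f i a = b) x y → y ≠ P.null →
        Relation.TransGen (fun y x => x ≠ P.null ∧ ∃ i, P.f i x = y) y x := by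
      intro x y h
      induction h with
      | @single c h =>
        intro hy
        refine .single ⟨?_, h⟩
        rintro rfl
        obtain ⟨i, rfl⟩ := h
        exact hy (P.fn i)
      | @tail b c _ h ih =>
        intro hy
        have hb : b ≠ P.null := by
          rintro rfl
          obtain ⟨i, rfl⟩ := h
          exact hy (P.fn i)
        exact Relation.TransGen.head ⟨hb, h⟩ (ih hb)
    intro x hx hc
    exact P.wf.transGen.irrefl.irrefl x (key x x hc hx)
  · intro G
    constructor
    · rintro ⟨h, -, h1, h2, h3, h4⟩
      refine ⟨h, ?_, fun x => h3 x trivial, fun x => h4 x trivial⟩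
      intro i x
      cases i
      · exact h1 _ _ rfl
      · exact h2 _ _ rfl
    · rintro ⟨h, h1, h3, h4⟩
      refine ⟨h, fun _ _ => trivial, ?_, ?_, fun x _ => h3 x, fun x _ => h4 x⟩
      · rintro x y rfl; exact h1 false x
      · rintro x y rfl; exact h1 true x

theorem implies_iff (G1 G2 : FinGraph) :
    AcyclicHeapImplies G1.toPreGraph G2.toPreGraph ↔
      ∀ P : HP, HomP P G1.adj G1.null G1.root → HomP P G2.adj G2.null G2.root := by
  constructor
  · intro h P hP
    obtain ⟨H, hH, e⟩ := HP_to_heap P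
    exact (e G2).1 (h _ H hH ((e G1).2 hP))
  · intro h γ H hH hm
    obtain ⟨P, e⟩ := heap_to_HP H hH
    exact (e G2).2 (h P ((e G1).1 hm))

/-- Any finite abstract graph can be realised as a `FinGraph`. -/
theorem exists_finGraph {β : Type} [Finite β] (adj : Bool → β → β → Prop) (nu ro : β)
    (hne : ro ≠ nu) (hnu : ∀ i x, adj i nu x ↔ x = nu) :
    ∃ G : FinGraph, ∀ P : HP, HomP P G.adj G.null G.root ↔ HomP P adj nu ro := by
  classical
  obtain ⟨k, ⟨e⟩⟩ := Finite.exists_equiv_fin β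
  refine ⟨⟨k, fun x y => decide (adj false (e.symm x) (e.symm y)),
    fun x y => decide (adj true (e.symm x) (e.symm y)), e nu, e ro, ?_, ?_, ?_⟩, ?_⟩
  · simpa using hne
  · intro x; simp [hnu, Equiv.symm_apply_eq]
  · intro x; simp [hnu, Equiv.symm_apply_eq]
  · intro P
    constructor
    · rintro ⟨h, h1, h2, h3⟩
      refine ⟨fun x => e.symm (h x), ?_, ?_, ?_⟩
      · intro i x
        have := h1 i x
        cases i <;> simpa [FinGraph.adj] using this
      · intro x; rw [Equiv.symm_apply_eq]; exact h2 x
      · intro x; rw [Equiv.symm_apply_eq]; exact h3 x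
    · rintro ⟨h, h1, h2, h3⟩
      refine ⟨fun x => e (h x), ?_, ?_, ?_⟩
      · intro i x
        have := h1 i x
        cases i <;> simpa [FinGraph.adj] using this
      · intro x; exact e.injective.eq_iff.trans (h2 x)
      · intro x; exact e.injective.eq_iff.trans (h3 x)
/-! ### Clauses, colours and the two graphs -/

structure Clause where
  nul : List (List Bool)
  non : List (List Bool)
  dif : List (List Bool × List Bool)

def Clause.short (c : Clause) : Prop :=
  (∀ u ∈ c.nul, u.length ≤ 5) ∧ (∀ u ∈ c.non, u.length ≤ 5) ∧
    ∀ p ∈ c.dif, p.1.length ≤ 5 ∧ p.2.length ≤ 5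

def satW {X : Type} (null : X) (wk : List Bool → X) (c : Clause) : Prop :=
  (∀ u ∈ c.nul, wk u = null) ∧ (∀ u ∈ c.non, wk u ≠ null) ∧
    ∀ p ∈ c.dif, wk p.1 = wk p.2 → wk p.1 = null

structure Sys where
  Q : Type
  fin : Finite Q
  step : Q → Bool → Q
  M : Q
  dat : Q
  cl : Q → List Clause
  hdat : ∀ i, step dat i = dat
  hM : step M true = dat
  len : ∀ q, ∀ c ∈ cl q, c.short

inductive Nd (Q : Type) where
  | null | root
  | q (a : Q)
  | k (j : ℕ)

def Nd.col (S : Sys) : Nd S.Q → Option S.Q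
  | .null => none
  | .root => none
  | .q a => some a
  | .k _ => some S.dat

open Classical in
/-- edges of the first graph -/
def Sys.adj (S : Sys) (n : ℕ) : Bool → Nd S.Q → Nd S.Q → Prop
  | _, .null, y => y = .null
  | false, .root, y => y = .q S.M
  | true, .root, y => y = .null
  | i, .q a, y => if a = S.M ∧ i = true then y = .k n else
      y = .null ∨ y = .q (S.step a i) ∨ (S.step a i = S.dat ∧ ∃ j, y = .k j)
  | false, .k 0, y => y = .null
  | false, .k (j+1), y => y = .k j
  | true, .k _, y => y = .null

open Classical in
theorem Sys.adj_q (S : Sys) (n : ℕ) (i : Bool) (a : S.Q) (y : Nd S.Q) :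
    S.adj n i (.q a) y = if a = S.M ∧ i = true then y = .k n else
      y = .null ∨ y = .q (S.step a i) ∨ (S.step a i = S.dat ∧ ∃ j, y = .k j) := by
  cases i <;> rfl

theorem Sys.adj_col (S : Sys) {n : ℕ} {i : Bool} {x y : Nd S.Q} {a : S.Q} (h : S.adj n i x y)
    (hx : x.col S = some a) : y = .null ∨ y.col S = some (S.step a i) := by
  match i, x, hx, h with
  | i, .q b, hx, h =>
    simp only [Nd.col, Option.some.injEq] at hx
    subst hx
    rw [Sys.adj_q] at h
    split_ifs at h with hc
    · right; rw [h]; obtain ⟨rfl, rfl⟩ := hc; simp [Nd.col, S.hM]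
    · rcases h with h | h | ⟨h, j, h'⟩
      · exact Or.inl h
      · right; rw [h]; rfl
      · right; rw [h', h]; rfl
  | false, .k 0, hx, h => exact Or.inl h
  | false, .k (j+1), hx, h =>
    simp only [Nd.col, Option.some.injEq] at hx
    subst hx
    right; unfold Sys.adj at h; rw [h, S.hdat]; rfl
  | true, .k j, hx, h => left; cases j <;> exact h

theorem col_ne {S : Sys} {x : Nd S.Q} (h1 : x ≠ .null) (h2 : x ≠ .root) :
    ∃ a, x.col S = some a := by
  cases x with
  | null => exact absurd rfl h1
  | root => exact absurd rfl h2
  | q a => exact ⟨a, rfl⟩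
  | k j => exact ⟨_, rfl⟩

theorem Sys.adj_ne_root (S : Sys) {n : ℕ} {i : Bool} {x : Nd S.Q} : ¬ S.adj n i x .root := by
  intro h
  cases x with
  | null => simp [Sys.adj] at h
  | root => cases i <;> simp [Sys.adj] at h
  | q a => rw [Sys.adj_q] at h; split_ifs at h <;> simp at h
  | k j => cases i <;> cases j <;> simp [Sys.adj] at h

inductive Ph where
  | off | here
  | go (i : Bool)

abbrev Wd : Type := {l : List Bool // l.length ≤ 5}

abbrev Sys.C (S : Sys) : Type := Σ q : S.Q, Fin (S.cl q).length

def Sys.cc (S : Sys) (c : S.C) : Clause := (S.cl c.1).get c.2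

inductive V2 (S : Sys) where
  | null | root
  | lab (c : S.C) (p : Ph) (a : S.Q) (T : Set Wd)

instance : Finite Ph := by
  refine Finite.of_surjective (fun x : Option (Option Bool) => match x with
    | none => Ph.off | some none => Ph.here | some (some i) => Ph.go i) ?_
  intro p
  cases p with
  | off => exact ⟨none, rfl⟩
  | here => exact ⟨some none, rfl⟩
  | go i => exact ⟨some (some i), rfl⟩

instance : Finite Wd := List.finite_length_le Bool 5

instance (S : Sys) : Finite (V2 S) := by
  have := S.fin
  refine Finite.of_surjective (fun x : Option (Option (S.C × Ph × S.Q × Set Wd)) => match x with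
    | none => V2.null | some none => V2.root | some (some (c, p, a, T)) => V2.lab c p a T) ?_
  intro p
  cases p with
  | null => exact ⟨none, rfl⟩
  | root => exact ⟨some none, rfl⟩
  | lab c p a T => exact ⟨some (some (c, p, a, T)), rfl⟩

def Sys.valid (S : Sys) (c : S.C) (p : Ph) (a : S.Q) (T : Set Wd) : Prop :=
  (∀ u ∈ T, u.1 ∉ (S.cc c).nul) ∧
  (∀ d ∈ (S.cc c).dif, ∀ u ∈ T, ∀ v ∈ T, ¬ (u.1 = d.1 ∧ v.1 = d.2)) ∧
  (p = .here → c.1 = a ∧ ∃ u ∈ T, u.1 = [])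

/-- edges of the second graph -/
def Sys.adj2 (S : Sys) : Bool → V2 S → V2 S → Prop
  | _, .null, y => y = .null
  | false, .root, y => ∃ c p T, p ≠ Ph.off ∧ y = .lab c p S.M T
  | true, .root, y => y = .null
  | i, .lab c p a T, .null => S.valid c p a T ∧ p ≠ .go i ∧
      ∀ u ∈ T, ∀ t, u.1 ++ i :: t ∉ (S.cc c).non
  | _, .lab _ _ _ _, .root => False
  | i, .lab c p a T, .lab c' p' a' T' => S.valid c p a T ∧ c' = c ∧ a' = S.step a i ∧
      (p = .go i → p' ≠ .off) ∧ ∀ u ∈ T, ∀ v : Wd, v.1 = u.1 ++ [i] → v ∈ T'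

def HP.wk (P : HP) (x : P.X) (u : List Bool) : P.X := u.foldl (fun y i => P.f i y) x

theorem HP.wk_append (P : HP) (x : P.X) (u v : List Bool) :
    P.wk x (u ++ v) = P.wk (P.wk x u) v := by simp [HP.wk, List.foldl_append]

theorem HP.wk_null (P : HP) (u : List Bool) : P.wk P.null u = P.null := by
  induction u with
  | nil => rfl
  | cons i u ih => simpa [HP.wk, P.fn] using ih

theorem HP.reach_null (P : HP) {x : P.X}
    (h : Relation.ReflTransGen (fun a b => ∃ i, P.f i a = b) P.null x) : x = P.null := by
  induction h with
  | refl => rfl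
  | tail _ h ih => obtain ⟨i, rfl⟩ := h; rw [ih, P.fn]

/-- a colouring has a defect -/
def Defect (S : Sys) (P : HP) (h : P.X → Nd S.Q) : Prop :=
  ∃ x a, (h x).col S = some a ∧ ∃ c ∈ S.cl a, satW P.null (P.wk x) c

theorem hom2_of_defect (S : Sys) (P : HP) (n : ℕ) (h : P.X → Nd S.Q)
    (h1 : ∀ i x, S.adj n i (h x) (h (P.f i x))) (h2 : ∀ x, h x = .root ↔ x = P.root)
    (h3 : ∀ x, h x = .null ↔ x = P.null) (hd : Defect S P h) :
    HomP P S.adj2 .null .root := by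
  classical
  obtain ⟨x, a, hxa, cc, hcc, hsat⟩ := hd
  obtain ⟨m, hm⟩ := List.get_of_mem hcc
  let c : S.C := ⟨a, m⟩
  have hc : S.cc c = cc := hm
  let R : P.X → P.X → Prop := Relation.ReflTransGen (fun a b => ∃ i, P.f i a = b)
  let ph : P.X → Ph := fun y => if y = x then .here else if R (P.f false y) x then .go false
    else if R (P.f true y) x then .go true else .off
  have hxn : x ≠ P.null := by
    intro e; rw [(h3 x).2 e] at hxa; simp [Nd.col] at hxa
  have hxr : x ≠ P.root := by
    intro e; rw [(h2 x).2 e] at hxa; simp [Nd.col] at hxa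
  have ph_on : ∀ y, R y x → ph y ≠ .off := by
    intro y hy
    simp only [ph]
    rcases Relation.ReflTransGen.cases_head hy with e | ⟨z, ⟨i, rfl⟩, hz⟩
    · simp [e]
    · cases i
      · have : R (P.f false y) x := hz
        simp only [this, if_true]; split_ifs <;> simp
      · have : R (P.f true y) x := hz
        simp only [this, if_true]; split_ifs <;> simp
  have ph_go : ∀ y i, ph y = .go i → R (P.f i y) x := by
    intro y i e
    simp only [ph] at e
    split_ifs at e with e1 e2 e3 <;> simp at e <;> subst e <;> assumption
  have ph_here : ∀ y, ph y = .here → y = x := by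
    intro y e
    simp only [ph] at e
    split_ifs at e; assumption
  let T : P.X → Set Wd := fun y => {u | P.wk x u.1 = y}
  let colr : P.X → S.Q := fun y => ((h y).col S).getD S.M
  have hcol : ∀ y, y ≠ P.null → y ≠ P.root → (h y).col S = some (colr y) := by
    intro y y1 y2
    obtain ⟨b, hb⟩ := col_ne (S := S) (fun e => y1 ((h3 y).1 e)) (fun e => y2 ((h2 y).1 e))
    simp [colr, hb]
  let g : P.X → V2 S := fun y => if y = P.null then .null else if y = P.root then .root else
    .lab c (ph y) (colr y) (T y)
  have hgn : g P.null = .null := by simp [g]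
  have hgr : g P.root = .root := by simp [g, P.ne]
  have hgl : ∀ y, y ≠ P.null → y ≠ P.root → g y = .lab c (ph y) (colr y) (T y) := by
    intro y y1 y2; simp [g, y1, y2]
  have hvalid : ∀ y, y ≠ P.null → y ≠ P.root → S.valid c (ph y) (colr y) (T y) := by
    intro y y1 y2
    refine ⟨?_, ?_, ?_⟩
    · intro u hu hu'
      rw [hc] at hu'
      exact y1 (by rw [← hsat.1 _ hu']; exact hu.symm)
    · rintro d hd' u hu v hv ⟨e1, e2⟩
      rw [hc] at hd'
      have hu2 : P.wk x u.1 = y := hu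
      have hv2 : P.wk x v.1 = y := hv
      rw [e1] at hu2; rw [e2] at hv2
      exact y1 (by rw [← hu2]; exact hsat.2.2 d hd' (hu2.trans hv2.symm))
    · intro e
      have e := ph_here y e
      subst e
      refine ⟨?_, ⟨[], by simp⟩, rfl, rfl⟩
      simp [colr, hxa, c]
  refine ⟨g, ?_, ?_, ?_⟩
  · intro i y
    by_cases y1 : y = P.null
    · subst y1; rw [P.fn, hgn]; simp [Sys.adj2]
    by_cases y2 : y = P.root
    · subst y2
      rw [hgr]
      have hE := h1 i P.root
      rw [(h2 _).2 rfl] at hE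
      cases i
      · simp only [Sys.adj] at hE
        have z1 : P.f false P.root ≠ P.null := by
          intro e; rw [(h3 _).2 e] at hE; simp at hE
        have z2 : P.f false P.root ≠ P.root := by
          intro e; rw [(h2 _).2 e] at hE; simp at hE
        rw [hgl _ z1 z2]
        have hcM : colr (P.f false P.root) = S.M := by simp [colr, hE, Nd.col]
        refine ⟨c, _, T (P.f false P.root), ph_on _ ?_, by rw [hcM]⟩
        rcases Relation.ReflTransGen.cases_head (P.reach x hxn) with e | ⟨z, ⟨i, rfl⟩, hz⟩
        · exact absurd e.symm hxr
        · cases i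
          · exact hz
          · have hE' := h1 true P.root
            rw [(h2 _).2 rfl] at hE'
            simp only [Sys.adj] at hE'
            rw [(h3 _).1 hE'] at hz
            exact absurd (P.reach_null hz) hxn
      · simp only [Sys.adj] at hE
        rw [(h3 _).1 hE, hgn]
        simp [Sys.adj2]
    rw [hgl y y1 y2]
    by_cases z1 : P.f i y = P.null
    · rw [z1, hgn]
      refine ⟨hvalid y y1 y2, ?_, ?_⟩
      · intro e
        have := ph_go _ _ e
        rw [z1] at this
        exact hxn (P.reach_null this)
      · intro u hu t ht
        rw [hc] at ht
        refine hsat.2.1 _ ht ?_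
        have hu2 : P.wk x u.1 = y := hu
        rw [P.wk_append, hu2]
        show P.wk (P.f i y) t = _
        rw [z1, P.wk_null]
    have z2 : P.f i y ≠ P.root := by
      intro e
      have := h1 i y
      rw [(h2 _).2 e] at this
      exact S.adj_ne_root this
    rw [hgl _ z1 z2]
    refine ⟨hvalid y y1 y2, rfl, ?_, ?_, ?_⟩
    · rcases S.adj_col (h1 i y) (hcol y y1 y2) with e | e
      · exact absurd ((h3 _).1 e) z1
      · rw [hcol _ z1 z2] at e; exact Option.some.inj e
    · intro e; exact ph_on _ (ph_go _ _ e)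
    · intro u hu v hv
      have hu2 : P.wk x u.1 = y := hu
      show P.wk x v.1 = _
      rw [hv, P.wk_append, hu2]; rfl
  · intro y
    by_cases y1 : y = P.null
    · subst y1; rw [hgn]; simp [P.ne.symm]
    by_cases y2 : y = P.root
    · subst y2; simp [hgr]
    · rw [hgl y y1 y2]; simp [y2]
  · intro y
    by_cases y1 : y = P.null
    · subst y1; simp [hgn]
    by_cases y2 : y = P.root
    · subst y2; simp [hgr, P.ne]
    · rw [hgl y y1 y2]; simp [y1]

theorem defect_of_hom2 (S : Sys) (P : HP) (n : ℕ) (h : P.X → Nd S.Q)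
    (h1 : ∀ i x, S.adj n i (h x) (h (P.f i x))) (h2 : ∀ x, h x = .root ↔ x = P.root)
    (h3 : ∀ x, h x = .null ↔ x = P.null) (hg : HomP P S.adj2 .null .root) :
    Defect S P h := by
  obtain ⟨g, g1, g2, g3⟩ := hg
  -- uniqueness of colours
  have hcol : ∀ x, Relation.ReflTransGen (fun a b => ∃ i, P.f i a = b) P.root x →
      ∀ c p a T, g x = .lab c p a T → (h x).col S = some a := by
    intro x hx
    induction hx with
    | refl =>
      intro c p a T e
      rw [(g2 _).2 rfl] at e; simp at e
    | @tail b d _ hbd ih =>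
      obtain ⟨i, rfl⟩ := hbd
      intro c p a T e
      have hG := g1 i b
      have hH := h1 i b
      have hne : P.f i b ≠ P.null := by
        intro e'; rw [(g3 _).2 e'] at e; simp at e
      rw [e] at hG
      cases hb : g b with
      | null => rw [hb] at hG; simp [Sys.adj2] at hG
      | root =>
        rw [hb] at hG
        have e' := (g2 _).1 hb
        rw [(h2 _).2 e'] at hH
        cases i
        · simp only [Sys.adj] at hH
          simp only [Sys.adj2] at hG
          obtain ⟨_, _, _, _, hG⟩ := hG
          simp only [V2.lab.injEq] at hG
          rw [hH, hG.2.2.1]; rfl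
        · simp [Sys.adj2] at hG
      | lab c' p' a' T' =>
        rw [hb] at hG
        obtain ⟨-, -, rfl, -, -⟩ := hG
        rcases S.adj_col hH (ih _ _ _ _ hb) with e' | e'
        · exact absurd ((h3 _).1 e') hne
        · exact e'
  -- find the marked node
  have hfind : ∀ x c p a T, g x = .lab c p a T → p ≠ .off → ∃ x c a T, g x = .lab c .here a T := by
    intro x
    induction x using P.wf.induction with
    | _ x ih =>
      intro c p a T e hp
      cases p with
      | off => exact absurd rfl hp
      | here => exact ⟨_, _, _, _, e⟩
      | go i =>
        have hG := g1 i x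
        rw [e] at hG
        have hxn : x ≠ P.null := by
          intro e'; rw [(g3 _).2 e'] at e; simp at e
        cases hb : g (P.f i x) with
        | null => rw [hb] at hG; exact absurd rfl hG.2.1
        | root => rw [hb] at hG; exact hG.elim
        | lab c' p' a' T' =>
          rw [hb] at hG
          exact ih _ ⟨hxn, i, rfl⟩ _ _ _ _ hb (hG.2.2.2.1 rfl)
  have hroot := g1 false P.root
  rw [(g2 _).2 rfl] at hroot
  obtain ⟨c, p, T, hp, e⟩ := hroot
  obtain ⟨x, c, a, T, hx⟩ := hfind _ _ _ _ _ e hp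
  have hval : ∀ y c p a T, g y = .lab c p a T → S.valid c p a T := by
    intro y c p a T e
    have hG := g1 false y
    rw [e] at hG
    cases hb : g (P.f false y) with
    | null => rw [hb] at hG; exact hG.1
    | root => rw [hb] at hG; exact hG.elim
    | lab c' p' a' T' => rw [hb] at hG; exact hG.1
  have hxn : x ≠ P.null := by
    intro e'; rw [(g3 _).2 e'] at hx; simp at hx
  obtain ⟨hca, u0, hu0, hu0e⟩ := (hval _ _ _ _ _ hx).2.2 rfl
  have hw : ∀ (u : List Bool) (hu : u.length ≤ 5), P.wk x u ≠ P.null →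
      ∃ p a T, g (P.wk x u) = .lab c p a T ∧ (⟨u, hu⟩ : Wd) ∈ T := by
    intro u
    induction u using List.reverseRecOn with
    | nil =>
      intro hu _
      refine ⟨_, _, _, hx, ?_⟩
      have : (⟨[], hu⟩ : Wd) = u0 := Subtype.ext hu0e.symm
      rw [this]; exact hu0
    | append_singleton u i ih =>
      intro hu hne
      have hstep : P.wk x (u ++ [i]) = P.f i (P.wk x u) := by rw [P.wk_append]; rfl
      rw [hstep] at hne ⊢
      have hne' : P.wk x u ≠ P.null := by
        intro e'; rw [e', P.fn] at hne; exact hne rfl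
      have hu' : u.length ≤ 5 := by simp at hu; omega
      obtain ⟨p, a, T, e1, e2⟩ := ih hu' hne'
      have hG := g1 i (P.wk x u)
      rw [e1] at hG
      cases hb : g (P.f i (P.wk x u)) with
      | null => exact absurd ((g3 _).1 hb) hne
      | root => rw [hb] at hG; exact hG.elim
      | lab c' p' a' T' =>
        rw [hb] at hG
        obtain ⟨-, rfl, -, -, hT⟩ := hG
        exact ⟨_, _, _, rfl, hT _ e2 _ rfl⟩
  have hmem : S.cc c ∈ S.cl c.1 := List.get_mem _ _
  obtain ⟨s1, s2, s3⟩ := S.len _ _ hmem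
  refine ⟨x, a, hcol x (P.reach x hxn) _ _ _ _ hx, S.cc c, hca ▸ hmem, ?_, ?_, ?_⟩
  · intro u hu
    by_contra hne
    obtain ⟨p, a, T, e1, e2⟩ := hw u (s1 u hu) hne
    exact (hval _ _ _ _ _ e1).1 _ e2 hu
  · intro u hu
    have aux : ∀ v t : List Bool, u = v ++ t → P.wk x v ≠ P.null := by
      intro v
      induction v using List.reverseRecOn with
      | nil => intro t _; exact hxn
      | append_singleton v i ih =>
        intro t ht hnull
        have hstep : P.wk x (v ++ [i]) = P.f i (P.wk x v) := by rw [P.wk_append]; rfl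
        have hv := ih (i :: t) (by rw [ht]; simp)
        have hvl : v.length ≤ 5 := by
          have := s2 u hu; rw [ht] at this; simp at this; omega
        obtain ⟨p, a, T, e1, e2⟩ := hw v hvl hv
        have hG := g1 i (P.wk x v)
        rw [e1, ← hstep, hnull, (g3 _).2 rfl] at hG
        refine hG.2.2 _ e2 t ?_
        have : v ++ i :: t = u := by rw [ht]; simp
        rw [this]; exact hu
    exact aux u [] (by simp)
  · intro d hd he
    by_contra hne
    obtain ⟨p, a, T, e1, e2⟩ := hw d.1 (s3 d hd).1 hne
    obtain ⟨p', a', T', e1', e2'⟩ := hw d.2 (s3 d hd).2 (he ▸ hne)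
    rw [← he, e1] at e1'
    simp only [V2.lab.injEq] at e1'
    obtain ⟨-, rfl, rfl, rfl⟩ := e1'
    exact (hval _ _ _ _ _ e1).2.1 d hd _ e2 _ e2' ⟨rfl, rfl⟩
/-! ### Trees -/

inductive Tr (Q : Type) where
  | nil
  | node (t : Nd Q) (l r : Tr Q)

namespace Tr
variable {Q : Type}

def tag : Tr Q → Nd Q
  | nil => .null
  | node t _ _ => t

def ch (i : Bool) : Tr Q → Tr Q
  | nil => nil
  | node _ l r => if i then r else l

def walk (t : Tr Q) (u : List Bool) : Tr Q := u.foldl (fun y i => ch i y) t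

def size : Tr Q → ℕ
  | nil => 0
  | node _ l r => size l + size r + 1

theorem walk_append (t : Tr Q) (u v : List Bool) : walk t (u ++ v) = walk (walk t u) v := by
  simp [walk, List.foldl_append]

theorem walk_nil (u : List Bool) : walk (nil : Tr Q) u = nil := by
  induction u with
  | nil => rfl
  | cons i u ih => exact ih

theorem finite_walks (t : Tr Q) : (Set.range (walk t)).Finite := by
  induction t with
  | nil =>
    refine (Set.finite_singleton (nil : Tr Q)).subset ?_
    rintro _ ⟨u, rfl⟩
    exact walk_nil u
  | node a l r ihl ihr =>
    refine ((ihl.union ihr).insert (node a l r)).subset ?_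
    rintro _ ⟨u, rfl⟩
    cases u with
    | nil => exact Or.inl rfl
    | cons i u =>
      cases i
      · exact Or.inr (Or.inl ⟨u, rfl⟩)
      · exact Or.inr (Or.inr ⟨u, rfl⟩)

theorem nil_mem_walks (t : Tr Q) : ∃ u, walk t u = nil := by
  induction t with
  | nil => exact ⟨[], rfl⟩
  | node a l r ihl _ =>
    obtain ⟨u, hu⟩ := ihl
    exact ⟨false :: u, hu⟩

theorem size_ch (t : Tr Q) (h : t ≠ nil) (i : Bool) : size (ch i t) < size t := by
  cases t with
  | nil => exact absurd rfl h
  | node a l r => cases i <;> simp [ch, size] <;> omega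

/-- The functional heap of subterms. -/
def toHP (t : Tr Q) (ht : t ≠ nil) : HP where
  X := {s // ∃ u, walk t u = s}
  fin := finite_walks t
  f := fun i s => ⟨ch i s.1, by
    obtain ⟨s, u, rfl⟩ := s
    exact ⟨u ++ [i], by rw [walk_append]; rfl⟩⟩
  null := ⟨nil, nil_mem_walks t⟩
  root := ⟨t, [], rfl⟩
  fn := fun i => rfl
  ne := fun h => ht (congrArg Subtype.val h)
  reach := by
    rintro ⟨s, u, rfl⟩ -
    induction u using List.reverseRecOn with
    | nil => exact .refl
    | append_singleton u i ih =>
      refine Relation.ReflTransGen.tail ih ⟨i, ?_⟩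
      apply Subtype.ext
      show ch i (walk t u) = walk t (u ++ [i])
      rw [walk_append]; rfl
  wf := by
    refine Subrelation.wf (r := InvImage (· < ·) fun s => size s.1) ?_
      (InvImage.wf _ Nat.lt_wfRel.wf)
    rintro y x ⟨hx, i, rfl⟩
    exact size_ch _ (fun e => hx (Subtype.ext e)) i

theorem toHP_wk (t : Tr Q) (ht : t ≠ nil) (x : (toHP t ht).X) (u : List Bool) :
    ((toHP t ht).wk x u).1 = walk x.1 u := by
  induction u generalizing x with
  | nil => rfl
  | cons i u ih => exact ih _

end Tr

def Ok (S : Sys) (n : ℕ) : Tr S.Q → Prop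
  | .nil => True
  | .node a l r => a ≠ .null ∧ a ≠ .root ∧ S.adj n false a l.tag ∧ S.adj n true a r.tag ∧
      (∀ q, a.col S = some q → ∀ c ∈ S.cl q, ¬ satW .nil (Tr.node a l r).walk c) ∧
      Ok S n l ∧ Ok S n r

theorem Ok.ch {S : Sys} {n : ℕ} {t : Tr S.Q} (h : Ok S n t) (i : Bool) : Ok S n (t.ch i) := by
  cases t with
  | nil => trivial
  | node a l r =>
    obtain ⟨-, -, -, -, -, hl, hr⟩ := h
    cases i
    · exact hl
    · exact hr

theorem Ok.walk {S : Sys} {n : ℕ} {t : Tr S.Q} (h : Ok S n t) (u : List Bool) :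
    Ok S n (t.walk u) := by
  induction u generalizing t with
  | nil => exact h
  | cons i u ih => exact ih (h.ch i)

theorem Ok.adj {S : Sys} {n : ℕ} {t : Tr S.Q} (h : Ok S n t) (i : Bool) :
    S.adj n i t.tag (t.ch i).tag := by
  cases t with
  | nil => cases i <;> rfl
  | node a l r =>
    obtain ⟨-, -, h1, h2, -⟩ := h
    cases i
    · exact h1
    · exact h2

theorem Ok.tag_root {S : Sys} {n : ℕ} {t : Tr S.Q} (h : Ok S n t) : t.tag ≠ .root := by
  cases t with
  | nil => simp [Tr.tag]
  | node a l r => exact h.2.1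

theorem Ok.tag_null {S : Sys} {n : ℕ} {t : Tr S.Q} (h : Ok S n t) (h' : t.tag = .null) :
    t = .nil := by
  cases t with
  | nil => rfl
  | node a l r => exact absurd h' h.1

theorem heap_of_tree (S : Sys) (n : ℕ) (l r : Tr S.Q) (hok : Ok S n (.node (.q S.M) l r)) :
    ∃ P : HP, HomP P (S.adj n) .null .root ∧ ¬ HomP P S.adj2 .null .root := by
  let t : Tr S.Q := .node .root (.node (.q S.M) l r) .nil
  have ht : t ≠ .nil := by simp [t]
  let P := t.toHP ht
  have hx : ∀ x : P.X, x = P.root ∨ Ok S n x.1 := by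
    rintro ⟨x, u, rfl⟩
    cases u with
    | nil => exact Or.inl rfl
    | cons i u =>
      right
      cases i
      · exact hok.walk u
      · exact (show Ok S n (Tr.walk Tr.nil u) by rw [Tr.walk_nil]; trivial)
  let h : P.X → Nd S.Q := fun x => x.1.tag
  have h1 : ∀ i x, S.adj n i (h x) (h (P.f i x)) := by
    intro i x
    rcases hx x with rfl | hx
    · cases i <;> rfl
    · exact hx.adj i
  have h2 : ∀ x, h x = .root ↔ x = P.root := by
    intro x
    constructor
    · intro e
      rcases hx x with e' | hx
      · exact e'
      · exact absurd e hx.tag_root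
    · rintro rfl; rfl
  have h3 : ∀ x, h x = .null ↔ x = P.null := by
    intro x
    constructor
    · intro e
      rcases hx x with rfl | hx
      · exact absurd e (by simp [h, P, Tr.toHP, t, Tr.tag])
      · exact Subtype.ext (hx.tag_null e)
    · rintro rfl; rfl
  refine ⟨P, ⟨h, h1, h2, h3⟩, fun hg => ?_⟩
  obtain ⟨x, a, hxa, c, hc, hs1, hs2, hs3⟩ := defect_of_hom2 S P n h h1 h2 h3 hg
  rcases hx x with rfl | hok'
  · simp [h, P, Tr.toHP, t, Tr.tag, Nd.col] at hxa
  · obtain ⟨s, hs⟩ := x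
    cases s with
    | nil => simp [h, Tr.tag, Nd.col] at hxa
    | node b l' r' =>
      have hw : ∀ u, (P.wk ⟨Tr.node b l' r', hs⟩ u).1 = (Tr.node b l' r').walk u :=
        fun u => Tr.toHP_wk t ht _ u
      refine hok'.2.2.2.2.1 a hxa c hc ⟨?_, ?_, ?_⟩
      · intro u hu
        exact (hw u).symm.trans (congrArg Subtype.val (hs1 u hu))
      · intro u hu e
        exact hs2 u hu (Subtype.ext ((hw u).trans e))
      · intro d hd e
        have e1 := hs3 d hd (Subtype.ext ((hw d.1).trans (e.trans (hw d.2).symm)))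
        exact (hw d.1).symm.trans (congrArg Subtype.val e1)

theorem tree_of_heap (S : Sys) (n : ℕ) (P : HP) (h0 : HomP P (S.adj n) .null .root)
    (hg : ¬ HomP P S.adj2 .null .root) : ∃ l r, Ok S n (.node (.q S.M) l r) := by
  classical
  obtain ⟨h, h1, h2, h3⟩ := h0
  have hdef : ¬ Defect S P h := fun hd => hg (hom2_of_defect S P n h h1 h2 h3 hd)
  obtain ⟨U, hU0, hU1⟩ : ∃ U : P.X → Tr S.Q, U P.null = .nil ∧
      ∀ x, x ≠ P.null → U x = .node (h x) (U (P.f false x)) (U (P.f true x)) := by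
    let F : ∀ x : P.X, (∀ y, (x ≠ P.null ∧ ∃ i, P.f i x = y) → Tr S.Q) → Tr S.Q := fun x rec =>
      if hx : x = P.null then .nil else
        .node (h x) (rec (P.f false x) ⟨hx, _, rfl⟩) (rec (P.f true x) ⟨hx, _, rfl⟩)
    refine ⟨P.wf.fix F, ?_, ?_⟩
    · rw [P.wf.fix_eq]; simp [F]
    · intro x hx
      rw [P.wf.fix_eq]; simp [F, hx]
  have htag : ∀ x, (U x).tag = h x := by
    intro x
    by_cases hx : x = P.null
    · subst hx; rw [hU0, (h3 _).2 rfl]; rfl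
    · rw [hU1 x hx]; rfl
  have hnil : ∀ x, U x = .nil → x = P.null := by
    intro x e
    by_contra hx
    rw [hU1 x hx] at e; simp at e
  have hch : ∀ x i, (U x).ch i = U (P.f i x) := by
    intro x i
    by_cases hx : x = P.null
    · subst hx; rw [P.fn, hU0]; rfl
    · rw [hU1 x hx]; cases i <;> rfl
  have hwalk : ∀ u x, (U x).walk u = U (P.wk x u) := by
    intro u
    induction u with
    | nil => intro x; rfl
    | cons i u ih =>
      intro x
      show ((U x).ch i).walk u = U (P.wk (P.f i x) u)
      rw [hch, ih]
  have hok : ∀ x, x ≠ P.root → Ok S n (U x) := by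
    intro x
    induction x using P.wf.induction with
    | _ x ih =>
      intro hr
      by_cases hx : x = P.null
      · subst hx; rw [hU0]; trivial
      have hnr : ∀ i, P.f i x ≠ P.root := by
        intro i e
        have := h1 i x
        rw [(h2 _).2 e] at this
        exact S.adj_ne_root this
      rw [hU1 x hx]
      refine ⟨fun e => hx ((h3 _).1 e), fun e => hr ((h2 _).1 e), ?_, ?_, ?_,
        ih _ ⟨hx, _, rfl⟩ (hnr _), ih _ ⟨hx, _, rfl⟩ (hnr _)⟩
      · rw [htag]; exact h1 false x
      · rw [htag]; exact h1 true x
      · rw [← hU1 x hx]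
        rintro q hq c hc ⟨s1, s2, s3⟩
        refine hdef ⟨x, q, hq, c, hc, ?_, ?_, ?_⟩
        · intro u hu; exact hnil _ (by rw [← hwalk]; exact s1 u hu)
        · intro u hu e; exact s2 u hu (by rw [hwalk, e, hU0])
        · intro d hd e
          exact hnil _ (by rw [← hwalk]; exact s3 d hd (by rw [hwalk, hwalk, e]))
  have hE := h1 false P.root
  rw [(h2 _).2 rfl] at hE
  simp only [Sys.adj] at hE
  have z1 : P.f false P.root ≠ P.null := by
    intro e; rw [(h3 _).2 e] at hE; simp at hE
  have z2 : P.f false P.root ≠ P.root := by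
    intro e; rw [(h2 _).2 e] at hE; simp at hE
  have := hok _ z2
  rw [hU1 _ z1, hE] at this
  exact ⟨_, _, this⟩
/-! ### The first graph as a concrete finite graph -/

section First
variable (S : Sys) {k : ℕ} (e : S.Q ≃ Fin k)

def dec (x : ℕ) : Nd S.Q :=
  if x = 0 then .null else if x = 1 then .root else
    if h : x - 2 < k then .q (e.symm ⟨x - 2, h⟩) else .k (x - (2 + k))

def enc : Nd S.Q → ℕ
  | .null => 0
  | .root => 1
  | .q a => 2 + (e a).1
  | .k j => 2 + k + j

theorem dec_enc (x : Nd S.Q) : dec S e (enc S e x) = x := by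
  cases x with
  | null => rfl
  | root => rfl
  | q a => have : ¬ (2 + (e a).1 = 1) := by omega
           simp [dec, enc, this]
  | k j =>
    have h1 : ¬ (2 + k + j = 0) := by omega
    have h2 : ¬ (2 + k + j = 1) := by omega
    have h3 : ¬ (2 + k + j - 2 < k) := by omega
    show dec S e (2 + k + j) = _
    unfold dec
    rw [if_neg h1, if_neg h2, dif_neg h3]
    congr 1; omega

theorem enc_dec (x : ℕ) : enc S e (dec S e x) = x := by
  unfold dec
  split_ifs with h1 h2 h3
  · simp [enc, h1]
  · simp [enc, h2]
  · simp [enc]; omega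
  · simp only [enc]; omega

theorem dec_eq (x : ℕ) (y : Nd S.Q) : dec S e x = y ↔ x = enc S e y :=
  ⟨fun h => by rw [← h, enc_dec], fun h => by rw [h, dec_enc]⟩

open Classical in
noncomputable def tbl (i : Bool) (x y : ℕ) : Bool := decide (S.adj 0 i (dec S e x) (dec S e y))

theorem enc_lt {x : Nd S.Q} (h : ∀ j, x ≠ .k j) : enc S e x < 2 + k := by
  cases x with
  | null => simp [enc]
  | root => simp [enc]; omega
  | q a => have := (e a).2; simp [enc]
  | k j => exact absurd rfl (h j)

theorem sg_adj (n : ℕ) (i : Bool) (x y : ℕ) :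
    sg (tbl S e i) (2 + k) i n x y = true ↔ S.adj n i (dec S e x) (dec S e y) := by
  obtain ⟨x, rfl⟩ : ∃ x', x = enc S e x' := ⟨_, (enc_dec S e x).symm⟩
  obtain ⟨y, rfl⟩ : ∃ y', y = enc S e y' := ⟨_, (enc_dec S e y).symm⟩
  rw [dec_enc, dec_enc]
  by_cases hx : ∃ j, x = .k j
  · obtain ⟨j, rfl⟩ := hx
    have h1 : ¬ (enc S e (.k j) < 2 + k) := by simp [enc]
    have h2 : enc S e (.k j) = 2 + k ↔ j = 0 := by simp [enc]
    have h0 : ∀ y, enc S e y = 0 ↔ y = .null := fun y => by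
      rw [show 0 = enc S e .null from rfl, ← dec_eq, dec_enc]
    cases i with
    | true => cases j <;> simp [sg, h1, h0, Sys.adj]
    | false =>
      cases j with
      | zero => simp [sg, h1, h2, h0, Sys.adj]
      | succ j =>
        have h3 : enc S e y + 1 = enc S e (.k (j+1)) ↔ y = .k j := by
          rw [← dec_enc S e y, dec_eq, dec_enc]; simp only [enc]; omega
        simp [sg, h1, h2, h3, Sys.adj]
  · push Not at hx
    have h1 := enc_lt S e hx
    have hk : ∀ j, dec S e (2 + k + j) = .k j := fun j => dec_enc S e (.k j)
    simp only [sg, h1, if_true, tbl, dec_enc, decide_eq_true_eq]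
    by_cases hy : ∃ j, y = .k j
    · obtain ⟨j, rfl⟩ := hy
      have h2 : ¬ (enc S e (.k j) < 2 + k) := by simp [enc]
      have h3 : enc S e (.k j) = 2 + k + n ↔ j = n := by simp [enc]
      simp only [h2, if_false, h3]
      have : dec S e (if j = n then 2 + k else 2 + k + 1) = .k (if j = n then 0 else 1) := by
        split_ifs
        · exact hk 0
        · exact hk 1
      rw [this]
      cases x with
      | null => simp [Sys.adj]
      | root => cases i <;> simp [Sys.adj]
      | k j => exact absurd rfl (hx j)
      | q a =>
        rw [Sys.adj_q, Sys.adj_q]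
        by_cases hj : j = n <;> simp [hj]
    · push Not at hy
      have h2 := enc_lt S e hy
      simp only [h2, if_true, dec_enc]
      cases x with
      | null => simp [Sys.adj]
      | root => cases i <;> simp [Sys.adj]
      | k j => exact absurd rfl (hx j)
      | q a =>
        rw [Sys.adj_q, Sys.adj_q]
        simp [hy]

theorem adj_null_iff (n : ℕ) (i : Bool) (y : Nd S.Q) : S.adj n i .null y ↔ y = .null := by
  cases i <;> rfl

noncomputable def g1 (n : ℕ) : FinGraph where
  n := 2 + k + n + 1
  s1 := fun x y => sg (tbl S e false) (2 + k) false n x.1 y.1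
  s2 := fun x y => sg (tbl S e true) (2 + k) true n x.1 y.1
  null := ⟨0, by omega⟩
  root := ⟨1, by omega⟩
  root_ne_null := by simp
  null_s1 := by
    intro x
    rw [sg_adj, show dec S e 0 = .null from rfl, adj_null_iff, dec_eq]
    exact (Fin.ext_iff (a := x) (b := ⟨0, by omega⟩)).symm
  null_s2 := by
    intro x
    rw [sg_adj, show dec S e 0 = .null from rfl, adj_null_iff, dec_eq]
    exact (Fin.ext_iff (a := x) (b := ⟨0, by omega⟩)).symm

theorem g1_adj (n : ℕ) (i : Bool) (x y : Fin (2 + k + n + 1)) :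
    (g1 S e n).adj i x y ↔ S.adj n i (dec S e x) (dec S e y) := by
  rw [← sg_adj]
  cases i <;> simp [FinGraph.adj, g1]

open Classical in
def rcl (n : ℕ) : Nd S.Q → Nd S.Q
  | .k j => if j ≤ n then .k j else .q S.dat
  | x => x

theorem rcl_adj (hd : S.dat ≠ S.M) (n : ℕ) (i : Bool) (x y : Nd S.Q) (h : S.adj n i x y) :
    S.adj n i (rcl S n x) (rcl S n y) := by
  cases x with
  | null => rw [adj_null_iff] at h; subst h; cases i <;> rfl
  | root =>
    cases i
    · simp only [Sys.adj] at h; subst h; rfl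
    · simp only [Sys.adj] at h; subst h; rfl
  | q a =>
    simp only [rcl]
    rw [Sys.adj_q] at h ⊢
    split_ifs at h ⊢ with hc
    · subst h; simp
    · rcases h with rfl | rfl | ⟨h, j, rfl⟩
      · simp
      · simp
      · by_cases hj : j ≤ n <;> simp [hj, h]
  | k j =>
    by_cases hj : j ≤ n
    · simp only [rcl, hj, if_true]
      cases i with
      | true => cases j <;> (simp only [Sys.adj] at h; subst h; rfl)
      | false =>
        cases j with
        | zero => simp only [Sys.adj] at h; subst h; rfl
        | succ j =>
          simp only [Sys.adj] at h; subst h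
          simp [show j ≤ n by omega, Sys.adj]
    · have : rcl S n (.k j) = .q S.dat := by simp [rcl, hj]
      rw [this, Sys.adj_q, if_neg (by tauto), S.hdat]
      have hy : y = .null ∨ ∃ j', y = .k j' := by
        cases i <;> cases j <;> simp only [Sys.adj] at h
        · exact Or.inl h
        · exact Or.inr ⟨_, h⟩
        · exact Or.inl h
        · exact Or.inl h
      rcases hy with rfl | ⟨j', rfl⟩
      · exact Or.inl rfl
      · by_cases hj' : j' ≤ n <;> simp [hj', rcl]

theorem g1_hom (hd : S.dat ≠ S.M) (n : ℕ) (P : HP) :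
    HomP P (g1 S e n).adj (g1 S e n).null (g1 S e n).root ↔ HomP P (S.adj n) .null .root := by
  constructor
  · rintro ⟨h, h1, h2, h3⟩
    refine ⟨fun x => dec S e (h x).1, fun i x => (g1_adj S e n i _ _).1 (h1 i x), fun x => ?_,
      fun x => ?_⟩
    · rw [← h2, dec_eq]
      exact (Fin.ext_iff (a := h x) (b := (g1 S e n).root)).symm
    · rw [← h3, dec_eq]
      exact (Fin.ext_iff (a := h x) (b := (g1 S e n).null)).symm
  · rintro ⟨h, h1, h2, h3⟩
    have hlt : ∀ x, enc S e (rcl S n (h x)) < 2 + k + n + 1 := by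
      intro x
      cases h x with
      | null => simp [rcl, enc]
      | root => simp only [rcl, enc]; omega
      | q a => have := (e a).2; simp only [rcl, enc]; omega
      | k j =>
        have := (e S.dat).2
        by_cases hj : j ≤ n <;> simp only [rcl, enc, hj, if_true, if_false] <;> omega
    refine ⟨fun x => ⟨_, hlt x⟩, fun i x => ?_, fun x => ?_, fun x => ?_⟩
    · refine (g1_adj S e n i ⟨_, hlt x⟩ ⟨_, hlt (P.f i x)⟩).2 ?_
      simp only [dec_enc]
      exact rcl_adj S hd n i _ _ (h1 i x)
    · rw [← h2]
      refine (Fin.ext_iff (n := 2 + k + n + 1)).trans ?_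
      show enc S e (rcl S n (h x)) = enc S e .root ↔ _
      rw [← dec_eq, dec_enc]
      cases h x with
      | k j => by_cases hj : j ≤ n <;> simp [rcl, hj]
      | _ => simp [rcl]
    · rw [← h3]
      refine (Fin.ext_iff (n := 2 + k + n + 1)).trans ?_
      show enc S e (rcl S n (h x)) = enc S e .null ↔ _
      rw [← dec_eq, dec_enc]
      cases h x with
      | k j => by_cases hj : j ≤ n <;> simp [rcl, hj]
      | _ => simp [rcl]

theorem g1_encode (n : ℕ) : (g1 S e n).encode =
    Nat.pair (2 + k + n + 1) (Nat.pair
      (encMat (2 + k + n + 1) (sg (tbl S e false) (2 + k) false n)) (Nat.pair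
      (encMat (2 + k + n + 1) (sg (tbl S e true) (2 + k) true n)) (Nat.pair 0 1))) := by
  rw [← encode_mat, ← encode_mat]
  rfl

theorem g1_computable : Computable fun n => (g1 S e n).encode := by
  simp only [g1_encode]
  have hN : Primrec fun n : ℕ => 2 + k + n + 1 :=
    Primrec.succ.comp (Primrec.nat_add.comp (Primrec.const _) Primrec.id)
  refine Primrec.to_comp ?_
  exact Primrec₂.natPair.comp hN (Primrec₂.natPair.comp
    (encMat_primrec _ hN _ (sg_primrec _ _ _)) (Primrec₂.natPair.comp
    (encMat_primrec _ hN _ (sg_primrec _ _ _)) (Primrec.const _)))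

end First

theorem encode_inj {G G' : FinGraph} (h : G.encode = G'.encode) : G = G' := by
  have := Encodable.encode_injective h
  cases G; cases G'
  simp only [Sigma.mk.injEq] at this
  obtain ⟨rfl, h⟩ := this
  simp at h
  obtain ⟨rfl, rfl, rfl, rfl⟩ := h
  rfl

theorem reduction (S : Sys) (hd : S.dat ≠ S.M) (p : ℕ → Prop)
    (hp : ∀ n, p n ↔ ∃ l r, Ok S n (.node (.q S.M) l r)) (hc : ¬ ComputablePred p) :
    ¬ ComputablePred (fun m : ℕ =>
      ∃ G1 G2 : FinGraph, m = encodePair G1 G2 ∧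
        AcyclicHeapImplies G1.toPreGraph G2.toPreGraph) := by
  intro hcomp
  apply hc
  have := S.fin
  obtain ⟨k, ⟨e⟩⟩ := Finite.exists_equiv_fin S.Q
  obtain ⟨G2, hG2⟩ := exists_finGraph (β := V2 S) S.adj2 .null .root (by simp)
    (by intro i x; cases i <;> simp [Sys.adj2])
  have key : ∀ n, ¬ (∃ A B : FinGraph, encodePair (g1 S e n) G2 = encodePair A B ∧
        AcyclicHeapImplies A.toPreGraph B.toPreGraph) ↔ p n := by
    intro n
    rw [hp]
    constructor
    · intro h
      by_contra hno
      apply h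
      refine ⟨_, _, rfl, (implies_iff _ _).2 fun P hP => ?_⟩
      by_contra hP2
      exact hno (tree_of_heap S n P ((g1_hom S e hd n P).1 hP) (fun h' => hP2 ((hG2 P).2 h')))
    · rintro ⟨l, r, hok⟩ ⟨A, B, hAB, himp⟩
      obtain ⟨h1, h2⟩ := Nat.pair_eq_pair.1 hAB
      rw [← encode_inj h1, ← encode_inj h2] at himp
      obtain ⟨P, hP, hP2⟩ := heap_of_tree S n l r hok
      exact hP2 ((hG2 P).1 ((implies_iff _ _).1 himp P ((g1_hom S e hd n P).2 hP)))
  have hf : Computable fun n => encodePair (g1 S e n) G2 :=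
    Primrec₂.natPair.to_comp.comp (g1_computable S e) (Computable.const _)
  have hcn := ComputablePred.not hcomp
  have := ComputablePred.computable_iff.1 hcn
  obtain ⟨f, hfc, hfe⟩ := this
  refine ComputablePred.computable_iff.2 ⟨fun n => f (encodePair (g1 S e n) G2), hfc.comp hf, ?_⟩
  funext n
  rw [← key n]
  exact congrFun hfe _
/-! ### The system attached to a code -/

open Turing.ToPartrec (Code)

def lcd : Code → Code
  | .cons f _ => f
  | .comp f _ => f
  | .case f _ => f
  | .fix f => f
  | c => c

def rcd : Code → Code
  | .cons _ g => g
  | .comp _ g => g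
  | .case _ g => g
  | c => c

def subs : Code → Set Code
  | .cons f g => insert (.cons f g) (subs f ∪ subs g)
  | .comp f g => insert (.comp f g) (subs f ∪ subs g)
  | .case f g => insert (.case f g) (subs f ∪ subs g)
  | .fix f => insert (.fix f) (subs f)
  | c => {c}

theorem subs_self (c : Code) : c ∈ subs c := by
  cases c <;> simp [subs]

theorem subs_finite (c : Code) : (subs c).Finite := by
  induction c with
  | cons f g hf hg => exact (hf.union hg).insert _
  | comp f g hf hg => exact (hf.union hg).insert _
  | case f g hf hg => exact (hf.union hg).insert _
  | fix f hf => exact hf.insert _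
  | _ => exact Set.finite_singleton _

theorem subs_closed (c : Code) : ∀ d ∈ subs c, lcd d ∈ subs c ∧ rcd d ∈ subs c := by
  have key : ∀ (c f g : Code) (A : Set Code), (∀ d ∈ subs f, lcd d ∈ subs f ∧ rcd d ∈ subs f) →
      (∀ d ∈ subs g, lcd d ∈ subs g ∧ rcd d ∈ subs g) → lcd c = f → rcd c = g →
      ∀ d ∈ insert c (subs f ∪ subs g), lcd d ∈ insert c (subs f ∪ subs g) ∧
        rcd d ∈ insert c (subs f ∪ subs g) := by
    rintro c f g A hf hg rfl rfl d (rfl | hd | hd)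
    · exact ⟨Or.inr (Or.inl (subs_self _)), Or.inr (Or.inr (subs_self _))⟩
    · exact ⟨Or.inr (Or.inl (hf d hd).1), Or.inr (Or.inl (hf d hd).2)⟩
    · exact ⟨Or.inr (Or.inr (hg d hd).1), Or.inr (Or.inr (hg d hd).2)⟩
  induction c with
  | cons f g hf hg => exact key _ f g ∅ hf hg rfl rfl
  | comp f g hf hg => exact key _ f g ∅ hf hg rfl rfl
  | case f g hf hg => exact key _ f g ∅ hf hg rfl rfl
  | fix f hf =>
    rintro d (rfl | hd)
    · exact ⟨Or.inr (subs_self _), Or.inl rfl⟩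
    · exact ⟨Or.inr (hf d hd).1, Or.inr (hf d hd).2⟩
  | _ => rintro d rfl; exact ⟨rfl, rfl⟩

inductive St (F : Type) where
  | M | dat
  | J (f : F)
  | PR (f : F)

instance (F : Type) [Finite F] : Finite (St F) := by
  refine Finite.of_surjective (fun x : Bool ⊕ (F ⊕ F) => match x with
    | .inl true => St.M | .inl false => St.dat | .inr (.inl f) => St.J f
    | .inr (.inr f) => St.PR f) ?_
  intro p
  cases p with
  | M => exact ⟨.inl true, rfl⟩
  | dat => exact ⟨.inl false, rfl⟩
  | J f => exact ⟨.inr (.inl f), rfl⟩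
  | PR f => exact ⟨.inr (.inr f), rfl⟩

abbrev Ws : Type := List (List Bool)

def cEq (g h : Ws) (w w' : List Bool) : List Clause :=
  [⟨g, w :: h, [(w, w')]⟩, ⟨g, w' :: h, [(w, w')]⟩]
def cNe (g h : Ws) (w : List Bool) : List Clause := [⟨w :: g, h, []⟩]
def cNl (g h : Ws) (w : List Bool) : List Clause := [⟨g, w :: h, []⟩]

theorem cEq_iff {X : Type} (nl : X) (wk : List Bool → X) (g h : Ws) (w w' : List Bool) :
    (∀ c ∈ cEq g h w w', ¬ satW nl wk c) ↔
      ((∀ u ∈ g, wk u = nl) → (∀ u ∈ h, wk u ≠ nl) → wk w = wk w') := by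
  simp only [cEq, satW, List.forall_mem_cons, List.not_mem_nil, false_imp_iff, implies_true,
    and_true]
  constructor
  · rintro ⟨a, b⟩ h1 h2
    by_contra h3
    by_cases h4 : wk w = nl
    · exact b ⟨h1, ⟨fun e => h3 (h4.trans e.symm), h2⟩, fun e => absurd e h3⟩
    · exact a ⟨h1, ⟨h4, h2⟩, fun e => absurd e h3⟩
  · intro H
    constructor
    · rintro ⟨h1, ⟨h3, h2⟩, h4⟩
      exact h3 (h4 (H h1 h2))
    · rintro ⟨h1, ⟨h3, h2⟩, h4⟩
      exact h3 ((H h1 h2).symm.trans (h4 (H h1 h2)))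

theorem cNe_iff {X : Type} (nl : X) (wk : List Bool → X) (g h : Ws) (w : List Bool) :
    (∀ c ∈ cNe g h w, ¬ satW nl wk c) ↔
      ((∀ u ∈ g, wk u = nl) → (∀ u ∈ h, wk u ≠ nl) → wk w ≠ nl) := by
  simp only [cNe, satW, List.forall_mem_cons, List.not_mem_nil, false_imp_iff, implies_true,
    and_true]
  tauto

theorem cNl_iff {X : Type} (nl : X) (wk : List Bool → X) (g h : Ws) (w : List Bool) :
    (∀ c ∈ cNl g h w, ¬ satW nl wk c) ↔
      ((∀ u ∈ g, wk u = nl) → (∀ u ∈ h, wk u ≠ nl) → wk w = nl) := by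
  simp only [cNl, satW, List.forall_mem_cons, List.not_mem_nil, false_imp_iff, implies_true,
    and_true]
  tauto

namespace Wp
abbrev ip : List Bool := [false, false]
abbrev op : List Bool := [false, true]
abbrev p1 : List Bool := [true, false]
abbrev p2 : List Bool := [true, true]
abbrev i1 : List Bool := [true, false, false, false]
abbrev o1 : List Bool := [true, false, false, true]
abbrev i2 : List Bool := [true, true, false, false]
abbrev o2 : List Bool := [true, true, false, true]
end Wp

open Wp in
/-- the local requirements at an evaluation judgement node -/
def jcl : Code → List Clause
  | .zero' => cNe [] [] op ++ cNl [] [] [false, true, false] ++ cEq [] [] [false, true, true] ip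
  | .succ => cNe [] [] op ++ cNe [] [] [false, true, false] ++
      cEq [] [] [false, true, false, false] [false, false, false] ++ cNl [] [] [false, true, true]
  | .tail => cEq [] [] op [false, false, true]
  | .cons _ _ => cNe [] [] p1 ++ cNe [] [] p2 ++ cEq [] [] i1 ip ++ cEq [] [] i2 ip ++
      cNe [] [] op ++ cEq [] [] [false, true, false] [true, false, false, true, false] ++
      cEq [] [] [false, true, true] o2
  | .comp _ _ => cNe [] [] p1 ++ cNe [] [] p2 ++ cEq [] [] i2 ip ++ cEq [] [] i1 o2 ++
      cEq [] [] op o1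
  | .case _ _ =>
      cNe [[false, false, false]] [] p1 ++ cEq [[false, false, false]] [] i1 [false, false, true] ++
      cEq [[false, false, false]] [] op o1 ++
      cNe [] [[false, false, false]] p2 ++ cNe [] [[false, false, false]] i2 ++
      cEq [] [[false, false, false]] [true, true, false, false, false] [false, false, false, false] ++
      cEq [] [[false, false, false]] [true, true, false, false, true] [false, false, true] ++
      cEq [] [[false, false, false]] op o2
  | .fix _ => cNe [] [] p1 ++ cEq [] [] i1 ip ++
      cEq [[true, false, false, true, false]] [] op [true, false, false, true, true] ++
      cNe [] [[true, false, false, true, false]] p2 ++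
      cEq [] [[true, false, false, true, false]] i2 [true, false, false, true, true] ++
      cEq [] [[true, false, false, true, false]] op o2

theorem jcl_short (f : Code) : ∀ c ∈ jcl f, c.short := by
  cases f <;> simp [jcl, cEq, cNe, cNl, Clause.short]

def mcl : List Clause := cNe [] [] [false] ++ cEq [] [] [false, false, false] [true]

def sysOf (c : Code) : Sys where
  Q := St (subs c)
  fin := by
    have := (subs_finite c).to_subtype
    infer_instance
  step := fun q i => match q, i with
    | .M, false => .J ⟨c, subs_self c⟩
    | .M, true => .dat
    | .dat, _ => .dat
    | .J _, false => .dat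
    | .J f, true => .PR f
    | .PR f, false => .J ⟨lcd f.1, (subs_closed c f.1 f.2).1⟩
    | .PR f, true => .J ⟨rcd f.1, (subs_closed c f.1 f.2).2⟩
  M := .M
  dat := .dat
  cl := fun q => match q with
    | .M => mcl
    | .J f => jcl f.1
    | _ => []
  hdat := fun i => rfl
  hM := rfl
  len := by
    intro q
    cases q with
    | M => simp [mcl, cEq, cNe, Clause.short]
    | J f => exact jcl_short f.1
    | _ => simp

/-! ### Data trees -/

section Data
variable {Q : Type}

def nv : Tr Q → ℕ
  | .nil => 0
  | .node _ l _ => nv l + 1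

def lv : Tr Q → List ℕ
  | .nil => []
  | .node _ l r => nv l :: lv r

theorem nv_eq_zero (x : Tr Q) : nv x = 0 ↔ x = .nil := by
  cases x <;> simp [nv]

theorem nv_succ {x : Tr Q} (h : x ≠ .nil) : nv x = nv (x.ch false) + 1 := by
  cases x with
  | nil => exact absurd rfl h
  | node a l r => rfl

theorem lv_headI (x : Tr Q) : (lv x).headI = nv (x.ch false) := by
  cases x <;> rfl

theorem lv_tail (x : Tr Q) : (lv x).tail = lv (x.ch true) := by
  cases x <;> rfl

theorem lv_cons {x : Tr Q} (h : x ≠ .nil) : lv x = nv (x.ch false) :: lv (x.ch true) := by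
  cases x with
  | nil => exact absurd rfl h
  | node a l r => rfl

end Data
/-! ### Evaluation rules -/

theorem ev_zero {v : List ℕ} : (0 :: v) ∈ Code.zero'.eval v := by
  rw [Code.zero'_eval]; exact Part.mem_some _

theorem ev_succ {v : List ℕ} : [v.headI.succ] ∈ Code.succ.eval v := by
  rw [Code.succ_eval]; exact Part.mem_some _

theorem ev_tail {v : List ℕ} : v.tail ∈ Code.tail.eval v := by
  rw [Code.tail_eval]; exact Part.mem_some _

theorem ev_cons {f g : Code} {v o : List ℕ} :
    o ∈ (Code.cons f g).eval v ↔ ∃ a ∈ f.eval v, ∃ b ∈ g.eval v, o = a.headI :: b := by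
  rw [Code.cons_eval]
  simp only [Part.bind_eq_bind, Part.mem_bind_iff, Part.pure_eq_some, Part.mem_some_iff]

theorem ev_comp {f g : Code} {v o : List ℕ} :
    o ∈ (Code.comp f g).eval v ↔ ∃ a ∈ g.eval v, o ∈ f.eval a := by
  rw [Code.comp_eval]
  exact Part.mem_bind_iff

theorem ev_case0 {f g : Code} {v o : List ℕ} (h : v.headI = 0) :
    o ∈ (Code.case f g).eval v ↔ o ∈ f.eval v.tail := by
  rw [Code.case_eval]; simp only [h]; exact Iff.rfl

theorem ev_case1 {f g : Code} {v o : List ℕ} {y : ℕ} (h : v.headI = y + 1) :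
    o ∈ (Code.case f g).eval v ↔ o ∈ g.eval (y :: v.tail) := by
  rw [Code.case_eval]; simp only [h]

theorem fx_inl {f : Code} {v o : List ℕ} :
    (Sum.inl o ∈ (f.eval v).map fun v =>
      (if v.headI = 0 then Sum.inl v.tail else Sum.inr v.tail : List ℕ ⊕ List ℕ)) ↔
      ∃ a ∈ f.eval v, a.headI = 0 ∧ a.tail = o := by
  rw [Part.mem_map_iff]
  refine exists_congr fun a => and_congr_right fun _ => ?_
  split_ifs with h <;> simp [h]

theorem fx_inr {f : Code} {v o : List ℕ} :
    (Sum.inr o ∈ (f.eval v).map fun v =>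
      (if v.headI = 0 then Sum.inl v.tail else Sum.inr v.tail : List ℕ ⊕ List ℕ)) ↔
      ∃ a ∈ f.eval v, a.headI ≠ 0 ∧ a.tail = o := by
  rw [Part.mem_map_iff]
  refine exists_congr fun a => and_congr_right fun _ => ?_
  split_ifs with h <;> simp [h]

theorem ev_fix {f : Code} {v o : List ℕ} :
    o ∈ (Code.fix f).eval v ↔ (∃ a ∈ f.eval v, a.headI = 0 ∧ a.tail = o) ∨
      ∃ a ∈ f.eval v, a.headI ≠ 0 ∧ o ∈ (Code.fix f).eval a.tail := by
  rw [Code.fix_eval]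
  refine PFun.mem_fix_iff.trans (or_congr fx_inl ?_)
  constructor
  · rintro ⟨a', h, h'⟩
    obtain ⟨a, ha, h0, rfl⟩ := fx_inr.1 h
    exact ⟨a, ha, h0, h'⟩
  · rintro ⟨a, ha, h0, h'⟩
    exact ⟨_, fx_inr.2 ⟨a, ha, h0, rfl⟩, h'⟩

theorem adj_q_iff (S : Sys) (n : ℕ) (i : Bool) (a : S.Q) (y : Nd S.Q)
    (h : ¬ (a = S.M ∧ i = true)) : S.adj n i (.q a) y ↔
      y = .null ∨ y = .q (S.step a i) ∨ (S.step a i = S.dat ∧ ∃ j, y = .k j) := by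
  rw [Sys.adj_q, if_neg h]

theorem adj_M_iff (S : Sys) (n : ℕ) (y : Nd S.Q) : S.adj n true (.q S.M) y ↔ y = .k n := by
  rw [Sys.adj_q, if_pos ⟨rfl, rfl⟩]

/-! ### Trees represent evaluations: soundness -/

section Sound
variable {c : Code} {n : ℕ}

abbrev TT (c : Code) : Type := Tr (sysOf c).Q
abbrev tJ (f : subs c) : Nd (sysOf c).Q := .q (St.J f)
abbrev tP (f : subs c) : Nd (sysOf c).Q := .q (St.PR f)
abbrev tD : Nd (sysOf c).Q := .q St.dat
abbrev lcs (f : subs c) : subs c := ⟨lcd f.1, (subs_closed c f.1 f.2).1⟩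
abbrev rcs (f : subs c) : subs c := ⟨rcd f.1, (subs_closed c f.1 f.2).2⟩

theorem adj_J1 {f : subs c} {y : Nd (sysOf c).Q} (h : (sysOf c).adj n true (tJ f) y) :
    y = .null ∨ y = tP f := by
  rcases (adj_q_iff _ _ _ _ _ (by rintro ⟨h, -⟩; cases h)).1 h with h | h | ⟨h, -⟩
  · exact Or.inl h
  · exact Or.inr h
  · cases h

theorem adj_P0 {f : subs c} {y : Nd (sysOf c).Q} (h : (sysOf c).adj n false (tP f) y) :
    y = .null ∨ y = tJ (lcs f) := by
  rcases (adj_q_iff _ _ _ _ _ (by rintro ⟨h, -⟩; cases h)).1 h with h | h | ⟨h, -⟩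
  · exact Or.inl h
  · exact Or.inr h
  · cases h

theorem adj_P1 {f : subs c} {y : Nd (sysOf c).Q} (h : (sysOf c).adj n true (tP f) y) :
    y = .null ∨ y = tJ (rcs f) := by
  rcases (adj_q_iff _ _ _ _ _ (by rintro ⟨h, -⟩; cases h)).1 h with h | h | ⟨h, -⟩
  · exact Or.inl h
  · exact Or.inr h
  · cases h

theorem sub1 {t : TT c} {f : subs c} (ht : Ok (sysOf c) n t) (hf : t.tag = tJ f)
    (h : t.walk Wp.p1 ≠ .nil) : (t.walk Wp.p1).tag = tJ (lcs f) ∧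
      Ok (sysOf c) n (t.walk Wp.p1) ∧ (t.walk Wp.p1).size < t.size := by
  have h0 : t.ch true ≠ .nil := fun e => h (by
    show (t.ch true).ch false = _
    rw [e]; rfl)
  have ht0 : t ≠ .nil := fun e => h0 (by rw [e]; rfl)
  have e1 := ht.adj true
  rw [hf] at e1
  rcases adj_J1 e1 with e1 | e1
  · exact absurd ((ht.ch true).tag_null e1) h0
  have e2 := (ht.ch true).adj false
  rw [e1] at e2
  rcases adj_P0 e2 with e2 | e2
  · exact absurd (((ht.ch true).ch false).tag_null e2) h
  · exact ⟨e2, (ht.ch true).ch false, (Tr.size_ch _ h0 _).trans (Tr.size_ch _ ht0 _)⟩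

theorem sub2 {t : TT c} {f : subs c} (ht : Ok (sysOf c) n t) (hf : t.tag = tJ f)
    (h : t.walk Wp.p2 ≠ .nil) : (t.walk Wp.p2).tag = tJ (rcs f) ∧
      Ok (sysOf c) n (t.walk Wp.p2) ∧ (t.walk Wp.p2).size < t.size := by
  have h0 : t.ch true ≠ .nil := fun e => h (by
    show (t.ch true).ch true = _
    rw [e]; rfl)
  have ht0 : t ≠ .nil := fun e => h0 (by rw [e]; rfl)
  have e1 := ht.adj true
  rw [hf] at e1
  rcases adj_J1 e1 with e1 | e1
  · exact absurd ((ht.ch true).tag_null e1) h0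
  have e2 := (ht.ch true).adj true
  rw [e1] at e2
  rcases adj_P1 e2 with e2 | e2
  · exact absurd (((ht.ch true).ch true).tag_null e2) h
  · exact ⟨e2, (ht.ch true).ch true, (Tr.size_ch _ h0 _).trans (Tr.size_ch _ ht0 _)⟩

theorem Ok.clauses {S : Sys} {t : Tr S.Q} {q : S.Q} (ht : Ok S n t) (hq : t.tag = .q q) :
    ∀ c ∈ S.cl q, ¬ satW .nil t.walk c := by
  cases t with
  | nil => cases hq
  | node a l r => exact ht.2.2.2.2.1 q (by rw [show a = _ from hq]; rfl)

theorem sound_aux (m : ℕ) : ∀ (t : TT c) (f : subs c), t.size < m → Ok (sysOf c) n t →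
    t.tag = tJ f → lv (t.walk Wp.op) ∈ f.1.eval (lv (t.walk Wp.ip)) := by
  induction m with
  | zero => intro t f h; omega
  | succ m ih =>
    intro t f hm ht hf
    have hcl : ∀ d ∈ jcl f.1, ¬ satW .nil t.walk d := ht.clauses hf
    have a1 : t.walk Wp.p1 ≠ .nil → lv (t.walk Wp.o1) ∈ (lcd f.1).eval (lv (t.walk Wp.i1)) := by
      intro h
      obtain ⟨e1, e2, e3⟩ := sub1 ht hf h
      exact ih _ _ (by omega) e2 e1
    have a2 : t.walk Wp.p2 ≠ .nil → lv (t.walk Wp.o2) ∈ (rcd f.1).eval (lv (t.walk Wp.i2)) := by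
      intro h
      obtain ⟨e1, e2, e3⟩ := sub2 ht hf h
      exact ih _ _ (by omega) e2 e1
    obtain ⟨f, hfm⟩ := f
    clear hf ih
    have cw : ∀ u i, (t.walk u).ch i = t.walk (u ++ [i]) := fun u i => by
      rw [Tr.walk_append]; rfl
    have w1 : ∀ u, t.walk u ≠ .nil → lv (t.walk u) = nv (t.walk (u ++ [false])) ::
        lv (t.walk (u ++ [true])) := fun u h => by rw [lv_cons h, cw, cw]
    have w2 : ∀ u, (lv (t.walk u)).headI = nv (t.walk (u ++ [false])) := fun u => by
      rw [lv_headI, cw]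
    have w3 : ∀ u, (lv (t.walk u)).tail = lv (t.walk (u ++ [true])) := fun u => by
      rw [lv_tail, cw]
    have w4 : ∀ u, t.walk u ≠ .nil → nv (t.walk u) = nv (t.walk (u ++ [false])) + 1 :=
      fun u h => by rw [nv_succ h, cw]
    cases f with
    | zero' =>
      simp only [jcl, List.forall_mem_append, cEq_iff, cNe_iff, cNl_iff, List.not_mem_nil,
        false_imp_iff, implies_true, true_imp_iff] at hcl
      obtain ⟨⟨h1, h2⟩, h3⟩ := hcl
      rw [w1 _ h1]
      simp only [List.cons_append, List.nil_append, h2, h3]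
      exact ev_zero
    | succ =>
      simp only [jcl, List.forall_mem_append, cEq_iff, cNe_iff, cNl_iff, List.not_mem_nil,
        false_imp_iff, implies_true, true_imp_iff] at hcl
      obtain ⟨⟨⟨h1, h2⟩, h3⟩, h4⟩ := hcl
      have := @ev_succ (lv (t.walk Wp.ip))
      rw [w2] at this
      rw [w1 _ h1]
      simp only [List.cons_append, List.nil_append, h4] at this ⊢
      rw [w4 _ h2]
      simp only [List.cons_append, List.nil_append, h3]
      exact this
    | tail =>
      simp only [jcl, cEq_iff, List.not_mem_nil,
        false_imp_iff, implies_true, true_imp_iff] at hcl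
      have := @ev_tail (lv (t.walk Wp.ip))
      rw [w3] at this
      rw [hcl]
      exact this
    | cons f g =>
      simp only [jcl, List.forall_mem_append, cEq_iff, cNe_iff, cNl_iff, List.not_mem_nil,
        false_imp_iff, implies_true, true_imp_iff] at hcl
      obtain ⟨⟨⟨⟨⟨⟨h1, h2⟩, h3⟩, h4⟩, h5⟩, h6⟩, h7⟩ := hcl
      have b1 := a1 h1
      have b2 := a2 h2
      rw [h3] at b1
      rw [h4] at b2
      refine ev_cons.2 ⟨_, b1, _, b2, ?_⟩
      rw [w1 _ h5, w2]
      simp only [List.cons_append, List.nil_append, h6, h7]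
    | comp f g =>
      simp only [jcl, List.forall_mem_append, cEq_iff, cNe_iff, cNl_iff, List.not_mem_nil,
        false_imp_iff, implies_true, true_imp_iff] at hcl
      obtain ⟨⟨⟨⟨h1, h2⟩, h3⟩, h4⟩, h5⟩ := hcl
      have b1 := a1 h1
      have b2 := a2 h2
      rw [h4] at b1
      rw [h3] at b2
      rw [h5]
      exact ev_comp.2 ⟨_, b2, b1⟩
    | case f g =>
      simp only [jcl, List.forall_mem_append, cEq_iff, cNe_iff, cNl_iff, List.not_mem_nil,
        false_imp_iff, implies_true, true_imp_iff, List.mem_singleton, forall_eq] at hcl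
      obtain ⟨⟨⟨⟨⟨⟨⟨h1, h2⟩, h3⟩, h4⟩, h5⟩, h6⟩, h7⟩, h8⟩ := hcl
      by_cases h0 : t.walk [false, false, false] = .nil
      · have b1 := a1 (h1 h0)
        rw [h2 h0] at b1
        rw [h3 h0]
        refine (ev_case0 ?_).2 ?_
        · rw [w2]; exact (nv_eq_zero _).2 h0
        · rw [w3]; exact b1
      · have b2 := a2 (h4 h0)
        rw [w1 _ (h5 h0)] at b2
        simp only [List.cons_append, List.nil_append, h6 h0, h7 h0] at b2
        rw [h8 h0]
        refine (ev_case1 (y := nv (t.walk [false, false, false, false])) ?_).2 ?_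
        · rw [w2]; exact w4 _ h0
        · rw [w3]; exact b2
    | fix f =>
      simp only [jcl, List.forall_mem_append, cEq_iff, cNe_iff, cNl_iff, List.not_mem_nil,
        false_imp_iff, implies_true, true_imp_iff, List.mem_singleton, forall_eq] at hcl
      obtain ⟨⟨⟨⟨⟨h1, h2⟩, h3⟩, h4⟩, h5⟩, h6⟩ := hcl
      have b1 := a1 h1
      rw [h2] at b1
      by_cases h0 : t.walk [true, false, false, true, false] = .nil
      · refine ev_fix.2 (Or.inl ⟨_, b1, ?_, ?_⟩)
        · rw [w2]; exact (nv_eq_zero _).2 h0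
        · rw [w3, h3 h0]; rfl
      · have b2 := a2 (h4 h0)
        rw [h5 h0] at b2
        rw [h6 h0]
        refine ev_fix.2 (Or.inr ⟨_, b1, ?_, ?_⟩)
        · rw [w2]; exact fun e => h0 ((nv_eq_zero _).1 e)
        · rw [w3]; exact b2

theorem kt_nv {S : Sys} (n : ℕ) (t : Tr S.Q) : ∀ j, Ok S n t → t.tag = .k j → nv t = j + 1 := by
  induction t with
  | nil => intro j _ h; cases h
  | node a l r ihl _ =>
    intro j h ha
    simp only [Tr.tag] at ha
    subst ha
    obtain ⟨-, -, h1, -, -, hl, -⟩ := h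
    cases j with
    | zero =>
      simp only [Sys.adj] at h1
      rw [hl.tag_null h1]; rfl
    | succ j =>
      simp only [Sys.adj] at h1
      simp only [nv]
      rw [ihl j hl h1]

theorem kt_lv {S : Sys} (n : ℕ) (t : Tr S.Q) (j : ℕ) (h : Ok S n t) (ha : t.tag = .k j) :
    lv t = [j] := by
  have h1 := kt_nv n t j h ha
  have h0 : t ≠ .nil := by rintro rfl; cases ha
  have h2 := h.adj true
  rw [ha] at h2
  have h3 : (t.ch true).tag = .null := by cases j <;> exact h2
  rw [lv_cons h0, (h.ch true).tag_null h3]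
  rw [nv_succ h0] at h1
  simp only [lv]
  congr 1; omega

theorem sound (l r : TT c) (h : Ok (sysOf c) n (.node (.q St.M) l r)) : (c.eval [n]).Dom := by
  have hcl := h.clauses (q := St.M) rfl
  have hcl' : ∀ d ∈ mcl, ¬ satW .nil (Tr.node (.q St.M) l r : TT c).walk d := hcl
  simp only [mcl, List.forall_mem_append, cEq_iff, cNe_iff, List.not_mem_nil,
        false_imp_iff, implies_true, true_imp_iff] at hcl'
  obtain ⟨h1, h2⟩ := hcl'
  obtain ⟨-, -, e1, e2, -, hl, hr⟩ := h
  have h1' : l ≠ .nil := h1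
  have h2' : l.walk Wp.ip = r := h2
  have e2' : r.tag = .k n := (adj_M_iff (sysOf c) n _).1 e2
  have e1' : l.tag = tJ ⟨c, subs_self c⟩ := by
    rcases (adj_q_iff _ _ _ _ _ (by simp)).1 e1 with e | e | ⟨e, -⟩
    · exact absurd (hl.tag_null e) h1'
    · exact e
    · cases e
  have := sound_aux _ l ⟨c, subs_self c⟩ (Nat.lt_succ_self _) hl e1'
  rw [h2', kt_lv n r n hr e2'] at this
  exact Part.dom_iff_mem.2 ⟨_, this⟩

end Sound
/-! ### Trees represent evaluations: completeness -/

theorem ch_f {Q : Type} (a : Nd Q) (l r : Tr Q) : (Tr.node a l r).ch false = l := rfl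
theorem ch_t {Q : Type} (a : Nd Q) (l r : Tr Q) : (Tr.node a l r).ch true = r := rfl
theorem ch_n {Q : Type} (i : Bool) : (Tr.nil : Tr Q).ch i = .nil := rfl

section Complete
variable {c : Code} {n : ℕ}

def DT (c : Code) (n : ℕ) (x : TT c) : Prop :=
  Ok (sysOf c) n x ∧ (x = .nil ∨ x.tag.col (sysOf c) = some St.dat)

theorem DT.nil : DT c n .nil := ⟨trivial, Or.inl rfl⟩

theorem DT.ch {x : TT c} (h : DT c n x) (i : Bool) : DT c n (x.ch i) := by
  refine ⟨h.1.ch i, ?_⟩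
  rcases h.2 with rfl | h2
  · exact Or.inl rfl
  · rcases (sysOf c).adj_col (h.1.adj i) h2 with e | e
    · exact Or.inl ((h.1.ch i).tag_null e)
    · exact Or.inr e

theorem DT.tag {x : TT c} (h : DT c n x) :
    x.tag = .null ∨ x.tag = tD ∨ ∃ j, x.tag = .k j := by
  rcases h.2 with rfl | h2
  · exact Or.inl rfl
  · cases hx : x.tag with
    | null => exact Or.inl rfl
    | root => rw [hx] at h2; cases h2
    | q a => rw [hx] at h2; cases h2; exact Or.inr (Or.inl rfl)
    | k j => exact Or.inr (Or.inr ⟨j, rfl⟩)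

theorem adj_dat {x : TT c} (h : DT c n x) {a : (sysOf c).Q} {i : Bool}
    (ha : ¬ (a = St.M ∧ i = true)) (hs : (sysOf c).step a i = St.dat) :
    (sysOf c).adj n i (.q a) x.tag := by
  refine (adj_q_iff _ _ _ _ _ ha).2 ?_
  rw [hs]
  rcases h.tag with e | e | e
  · exact Or.inl e
  · exact Or.inr (Or.inl e)
  · exact Or.inr (Or.inr ⟨rfl, e⟩)

theorem DT.node {x y : TT c} (hx : DT c n x) (hy : DT c n y) : DT c n (.node tD x y) := by
  refine ⟨⟨by simp, by simp, adj_dat hx (by rintro ⟨h, -⟩; cases h) rfl,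
    adj_dat hy (by rintro ⟨h, -⟩; cases h) rfl, ?_, hx.1, hy.1⟩, Or.inr rfl⟩
  intro q hq d hd
  cases hq
  cases hd

theorem mkJ (f : subs c) {x y p1 p2 : TT c} (hx : DT c n x) (hy : DT c n y)
    (h1 : Ok (sysOf c) n p1) (h2 : Ok (sysOf c) n p2)
    (t1 : p1.tag = .null ∨ p1.tag = tJ (lcs f)) (t2 : p2.tag = .null ∨ p2.tag = tJ (rcs f))
    (hcl : ∀ d ∈ jcl f.1, ¬ satW .nil
      (Tr.node (tJ f) (.node tD x y) (.node (tP f) p1 p2) : TT c).walk d) :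
    Ok (sysOf c) n (.node (tJ f) (.node tD x y) (.node (tP f) p1 p2)) := by
  refine ⟨by simp, by simp, adj_dat (hx.node hy) (by rintro ⟨h, -⟩; cases h) rfl, ?_, ?_,
    (hx.node hy).1, by simp, by simp, ?_, ?_, ?_, h1, h2⟩
  · exact (adj_q_iff _ _ _ _ _ (by rintro ⟨h, -⟩; cases h)).2 (Or.inr (Or.inl rfl))
  · intro q hq
    cases hq
    exact hcl
  · exact (adj_q_iff _ _ _ _ _ (by rintro ⟨h, -⟩; cases h)).2 (t1.imp id Or.inl)
  · exact (adj_q_iff _ _ _ _ _ (by rintro ⟨h, -⟩; cases h)).2 (t2.imp id Or.inl)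
  · intro q hq d hd
    cases hq
    cases hd

theorem complete (f : Code) : ∀ (hf : f ∈ subs c) (v o : List ℕ), o ∈ f.eval v → ∀ x : TT c,
    DT c n x → lv x = v → ∃ y p, DT c n y ∧ lv y = o ∧
      Ok (sysOf c) n (.node (tJ ⟨f, hf⟩) (.node tD x y) p) := by
  induction f with
  | zero' =>
    rintro hf v o ho x hx rfl
    have ho := Part.mem_unique ho ev_zero
    subst ho
    refine ⟨_, _, DT.nil.node hx, rfl, mkJ _ hx (DT.nil.node hx) (p1 := .nil) (p2 := .nil) trivial
      trivial (Or.inl rfl) (Or.inl rfl) ?_⟩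
    simp [jcl, List.forall_mem_append, cEq_iff, cNe_iff, cNl_iff, Tr.walk, ch_f, ch_t, ch_n,
      -List.mem_append]
  | succ =>
    rintro hf v o ho x hx rfl
    have ho := Part.mem_unique ho ev_succ
    subst ho
    have hy := ((hx.ch false).node DT.nil).node DT.nil
    refine ⟨_, _, hy, ?_, mkJ _ hx hy (p1 := .nil) (p2 := .nil) trivial
      trivial (Or.inl rfl) (Or.inl rfl) ?_⟩
    · simp [lv, nv, lv_headI]
    · simp [jcl, List.forall_mem_append, cEq_iff, cNe_iff, cNl_iff, Tr.walk, ch_f, ch_t, ch_n,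
        -List.mem_append]
  | tail =>
    rintro hf v o ho x hx rfl
    have ho := Part.mem_unique ho ev_tail
    subst ho
    refine ⟨_, _, hx.ch true, (lv_tail x).symm, mkJ _ hx (hx.ch true) (p1 := .nil) (p2 := .nil)
      trivial trivial (Or.inl rfl) (Or.inl rfl) ?_⟩
    simp [jcl, cEq_iff, Tr.walk, ch_f, ch_t, ch_n]
  | cons f g ihf ihg =>
    rintro hf v o ho x hx rfl
    obtain ⟨a, ha, b, hb, rfl⟩ := ev_cons.1 ho
    obtain ⟨y1, q1, hy1, rfl, k1⟩ := ihf (subs_closed c _ hf).1 _ _ ha x hx rfl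
    obtain ⟨y2, q2, hy2, rfl, k2⟩ := ihg (subs_closed c _ hf).2 _ _ hb x hx rfl
    have hy := (hy1.ch false).node hy2
    refine ⟨_, _, hy, ?_, mkJ _ hx hy k1 k2 (Or.inr rfl) (Or.inr rfl) ?_⟩
    · simp [lv, lv_headI]
    · simp [jcl, List.forall_mem_append, cEq_iff, cNe_iff, cNl_iff, Tr.walk, ch_f, ch_t, ch_n,
        -List.mem_append]
  | comp f g ihf ihg =>
    rintro hf v o ho x hx rfl
    obtain ⟨a, ha, hb⟩ := ev_comp.1 ho
    obtain ⟨y2, q2, hy2, rfl, k2⟩ := ihg (subs_closed c _ hf).2 _ _ ha x hx rfl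
    obtain ⟨y1, q1, hy1, rfl, k1⟩ := ihf (subs_closed c _ hf).1 _ _ hb y2 hy2 rfl
    refine ⟨_, _, hy1, rfl, mkJ _ hx hy1 k1 k2 (Or.inr rfl) (Or.inr rfl) ?_⟩
    simp [jcl, List.forall_mem_append, cEq_iff, cNe_iff, cNl_iff, Tr.walk, ch_f, ch_t, ch_n,
        -List.mem_append]
  | case f g ihf ihg =>
    rintro hf v o ho x hx rfl
    by_cases h0 : x.ch false = .nil
    · rw [ev_case0 (by rw [lv_headI, h0]; rfl), lv_tail] at ho
      obtain ⟨y1, q1, hy1, rfl, k1⟩ := ihf (subs_closed c _ hf).1 _ _ ho _ (hx.ch true) rfl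
      refine ⟨_, _, hy1, rfl, mkJ _ hx hy1 k1 (p2 := .nil) trivial (Or.inr rfl) (Or.inl rfl) ?_⟩
      simp [jcl, List.forall_mem_append, cEq_iff, cNe_iff, cNl_iff, Tr.walk, ch_f, ch_t, ch_n,
        -List.mem_append, h0]
    · rw [ev_case1 (y := nv ((x.ch false).ch false)) (by rw [lv_headI, nv_succ h0]), lv_tail] at ho
      obtain ⟨y2, q2, hy2, rfl, k2⟩ := ihg (subs_closed c _ hf).2 _ _ ho _
        (((hx.ch false).ch false).node (hx.ch true)) rfl
      refine ⟨_, _, hy2, rfl, mkJ _ hx hy2 (p1 := .nil) trivial k2 (Or.inl rfl) (Or.inr rfl) ?_⟩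
      simp [jcl, List.forall_mem_append, cEq_iff, cNe_iff, cNl_iff, Tr.walk, ch_f, ch_t, ch_n,
        -List.mem_append, h0]
  | fix f ihf =>
    intro hf v o ho
    have ho' := ho
    rw [Code.fix_eval] at ho'
    refine PFun.fixInduction' (C := fun v => ∀ x : TT c,
      DT c n x → lv x = v → ∃ y p, DT c n y ∧ lv y = o ∧
      Ok (sysOf c) n (.node (tJ ⟨.fix f, hf⟩) (.node tD x y) p)) ho' ?_ ?_
    · rintro _ h x hx rfl
      obtain ⟨a, ha, h0, rfl⟩ := fx_inl.1 h
      obtain ⟨y1, q1, hy1, rfl, k1⟩ := ihf (subs_closed c _ hf).1 _ _ ha x hx rfl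
      rw [lv_headI, nv_eq_zero] at h0
      refine ⟨_, _, hy1.ch true, (lv_tail _).symm, mkJ _ hx (hy1.ch true) k1 (p2 := .nil)
        trivial (Or.inr rfl) (Or.inl rfl) ?_⟩
      simp [jcl, List.forall_mem_append, cEq_iff, cNe_iff, cNl_iff, Tr.walk, ch_f, ch_t, ch_n,
        -List.mem_append, h0]
    · rintro _ _ - h ih x hx rfl
      obtain ⟨a, ha, h0, rfl⟩ := fx_inr.1 h
      obtain ⟨y1, q1, hy1, rfl, k1⟩ := ihf (subs_closed c _ hf).1 _ _ ha x hx rfl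
      rw [lv_headI, Ne, nv_eq_zero] at h0
      obtain ⟨y2, q2, hy2, e2, k2⟩ := ih (y1.ch true) (hy1.ch true) (lv_tail _).symm
      refine ⟨_, _, hy2, e2, mkJ _ hx hy2 k1 k2 (Or.inr rfl) (Or.inr rfl) ?_⟩
      simp [jcl, List.forall_mem_append, cEq_iff, cNe_iff, cNl_iff, Tr.walk, ch_f, ch_t, ch_n,
        -List.mem_append, h0]

def kt (c : Code) : ℕ → TT c
  | 0 => .node (.k 0) .nil .nil
  | j + 1 => .node (.k (j + 1)) (kt c j) .nil

theorem kt_tag (j : ℕ) : (kt c j).tag = .k j := by cases j <;> rfl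

theorem kt_ok (j : ℕ) : Ok (sysOf c) n (kt c j) := by
  induction j with
  | zero =>
    refine ⟨by simp, by simp, rfl, rfl, ?_, trivial, trivial⟩
    intro q hq d hd
    cases hq
    cases hd
  | succ j ih =>
    refine ⟨by simp, by simp, kt_tag j, rfl, ?_, ih, trivial⟩
    intro q hq d hd
    cases hq
    cases hd

theorem kt_dt (j : ℕ) : DT c n (kt c j) :=
  ⟨kt_ok j, Or.inr (by rw [kt_tag]; rfl)⟩

theorem main_iff (c : Code) (n : ℕ) : (c.eval [n]).Dom ↔
    ∃ l r, Ok (sysOf c) n (.node (.q (sysOf c).M) l r) := by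
  constructor
  · intro h
    obtain ⟨o, ho⟩ := Part.dom_iff_mem.1 h
    obtain ⟨y, p, -, -, hok⟩ := complete c (subs_self c) [n] o ho (kt c n) (kt_dt n)
      (kt_lv n _ n (kt_ok n) (kt_tag n))
    refine ⟨_, kt c n, by simp, by simp, ?_, ?_, ?_, hok, kt_ok n⟩
    · exact (adj_q_iff _ _ _ _ _ (by simp)).2 (Or.inr (Or.inl rfl))
    · exact (adj_M_iff _ _ _).2 (kt_tag n)
    · intro q hq
      cases hq
      show ∀ d ∈ mcl, _
      simp [mcl, List.forall_mem_append, cEq_iff, cNe_iff, Tr.walk, ch_f, ch_t, ch_n, -List.mem_append]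
  · rintro ⟨l, r, h⟩
    exact sound l r h

end Complete

/-- The implication problem for regular graph constraints over the class of
acyclic heaps is undecidable: the set of (codes of) pairs `⟨G1, G2⟩` of finite
graphs with `G1 ⇝_A G2` is not a computable set of natural numbers. -/
theorem implication_over_acyclic_heaps_undecidable :
    ¬ ComputablePred (fun m : ℕ =>
      ∃ G1 G2 : FinGraph, m = encodePair G1 G2 ∧
        AcyclicHeapImplies G1.toPreGraph G2.toPreGraph) := by
  obtain ⟨c, hc⟩ := exists_hard_code
  exact reduction (sysOf c) (fun h => by cases h) _ (main_iff c) hc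
end

section
/- Satisfiability of regular graph constraints over the class of heaps is decidable: for graphs whose node set is a finite type, the predicate 'there exists a heap H such that H → G'' is a decidable predicate of the graph G'. -/
universe u v w

namespace HeapSat

/-- Code of an edge relation: the table of its values. -/
abbrev Tab : Type := List (ℕ × List (ℕ × Bool))

/-- Code of a graph. -/
abbrev Dat : Type := ℕ × Tab × Tab × ℕ × ℕ

def tab {n : ℕ} (s : Fin n → Fin n → Bool) : Tab :=
  List.ofFn fun i => ((i : ℕ), List.ofFn fun j => ((j : ℕ), s i j))

def dat (G : FinGraph) : Dat := (G.n, tab G.s1, tab G.s2, (G.null : ℕ), (G.root : ℕ))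

theorem encode_map {α β : Type} [Encodable α] [Encodable β] (f : α → β)
    (hf : ∀ a, Encodable.encode (f a) = Encodable.encode a) (l : List α) :
    Encodable.encode (l.map f) = Encodable.encode l := by
  induction l with
  | nil => rfl
  | cons a l ih => simp [hf, ih]

theorem encode_finPi {β γ : Type} [Encodable β] [Encodable γ] {n : ℕ} (s : Fin n → β)
    (f : β → γ) (hf : ∀ b, Encodable.encode (f b) = Encodable.encode b) :
    (Encodable.finPi n (fun _ => β)).encode s =
      Encodable.encode (List.ofFn fun i => ((i : ℕ), f (s i))) := by
  have h1 : (Encodable.finPi n (fun _ => β)).encode s =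
      Encodable.encode (List.ofFn fun i => (⟨i, s i⟩ : Σ _ : Fin n, β)) := by
    have : (List.ofFn fun i => (⟨i, s i⟩ : Σ _ : Fin n, β)) =
      (List.Vector.ofFn fun i => (⟨i, s i⟩ : Σ _ : Fin n, β)).toList := by
      simp
    rw [this]
    rfl
  rw [h1, ← encode_map (fun p : Σ _ : Fin n, β => ((p.1 : ℕ), f p.2))]
  · rw [List.map_ofFn]; rfl
  · rintro ⟨a, b⟩
    simp only [Encodable.encode_prod_val, Encodable.encode_sigma_val, hf]
    rfl

theorem encode_tab {n : ℕ} (s : Fin n → Fin n → Bool) :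
    Encodable.encode s = Encodable.encode (tab s) := by
  exact encode_finPi s (fun t : Fin n → Bool => List.ofFn fun j => ((j : ℕ), t j))
    (fun t => (encode_finPi t id (fun _ => rfl)).symm)

theorem encode_dat (G : FinGraph) : G.encode = Encodable.encode (dat G) := by
  unfold FinGraph.encode dat
  rw [Encodable.encode_sigma_val]
  simp only [Encodable.encode_prod_val, encode_tab]
  rfl

def E (L : Tab) (x y : ℕ) : Prop := ∃ p ∈ L, p.1 = x ∧ ∃ q ∈ p.2, q.1 = y ∧ q.2 = true

def good (d : Dat × List ℕ) (x : ℕ) : Prop :=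
  (∃ y ∈ d.2, E d.1.2.1 x y) ∧ (∃ y ∈ d.2, E d.1.2.2.1 x y)

open Classical in
noncomputable def step (d : Dat) (U : List ℕ) : List ℕ := U.filter fun x => good (d, U) x

noncomputable def fin (d : Dat) : List ℕ := (step d)^[d.1] (List.range d.1)

theorem E_tab {n : ℕ} (s : Fin n → Fin n → Bool) (x y : ℕ) :
    E (tab s) x y ↔ ∃ (hx : x < n) (hy : y < n), s ⟨x, hx⟩ ⟨y, hy⟩ = true := by
  unfold E tab
  constructor
  · rintro ⟨p, hp, rfl, q, hq, rfl, h⟩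
    simp only [List.mem_ofFn] at hp
    obtain ⟨i, rfl⟩ := hp
    simp only [List.mem_ofFn] at hq
    obtain ⟨j, rfl⟩ := hq
    exact ⟨i.2, j.2, h⟩
  · rintro ⟨hx, hy, h⟩
    refine ⟨_, List.mem_ofFn.2 ⟨⟨x, hx⟩, rfl⟩, rfl, _, List.mem_ofFn.2 ⟨⟨y, hy⟩, rfl⟩, rfl, h⟩

open Primrec in
theorem E_prim : PrimrecRel fun (y : ℕ) (b : Tab × ℕ) => E b.1 b.2 y := by
  have h1 : PrimrecRel fun (q : ℕ × Bool) (y : ℕ) => q.1 = y ∧ q.2 = true :=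
    PrimrecPred.and (Primrec.eq.comp (fst.comp fst) snd)
      (Primrec.eq.comp (snd.comp fst) (const true))
  have h2 := h1.exists_mem_list
  have h3 : PrimrecRel fun (p : ℕ × List (ℕ × Bool)) (c : ℕ × ℕ) =>
      p.1 = c.1 ∧ ∃ q ∈ p.2, q.1 = c.2 ∧ q.2 = true :=
    PrimrecPred.and (Primrec.eq.comp (fst.comp fst) (fst.comp snd))
      (h2.comp (snd.comp fst) (snd.comp snd))
  exact h3.exists_mem_list.comp (fst.comp snd) (pair (snd.comp snd) fst)

open Primrec in
theorem good_prim : PrimrecRel fun (x : ℕ) (d : Dat × List ℕ) => good d x := by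
  have h := E_prim.exists_mem_list
  exact PrimrecPred.and
    (h.comp (snd.comp snd) (pair (fst.comp (snd.comp (fst.comp snd))) fst))
    (h.comp (snd.comp snd) (pair (fst.comp (snd.comp (snd.comp (fst.comp snd)))) fst))

open Primrec in
theorem step_prim : Primrec₂ step := by
  classical
  have h := good_prim.listFilter
  refine (h.comp snd Primrec.id).of_eq ?_
  rintro ⟨d, U⟩
  simp only [step, id]

open Primrec in
theorem fin_prim : Primrec fin :=
  nat_iterate fst (list_range.comp fst) step_prim

open Primrec in
theorem ans_prim : PrimrecPred fun d : Dat => d.2.2.2.2 ∈ fin d := by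
  have h := (Primrec.eq (α := ℕ)).exists_mem_list
  refine (h.comp fin_prim (snd.comp (snd.comp (snd.comp snd)))).of_eq ?_
  simp

/-- Invariance of post-fixed sets. -/
theorem sub_iter (d : Dat) (S : Set ℕ) (U : List ℕ) (h0 : ∀ x ∈ S, x ∈ U)
    (h1 : ∀ x ∈ S, (∃ y ∈ S, E d.2.1 x y) ∧ (∃ y ∈ S, E d.2.2.1 x y)) (k : ℕ) :
    ∀ x ∈ S, x ∈ (step d)^[k] U := by
  induction k with
  | zero => exact h0
  | succ k ih =>
    intro x hx
    rw [Function.iterate_succ_apply']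
    obtain ⟨⟨y, hy, hxy⟩, z, hz, hxz⟩ := h1 x hx
    simp only [step, List.mem_filter, decide_eq_true_eq]
    exact ⟨ih x hx, ⟨y, ih y hy, hxy⟩, ⟨z, ih z hz, hxz⟩⟩

theorem fix_iter (d : Dat) (U : List ℕ) (k : ℕ) :
    ((step d)^[k] U).length + k ≤ U.length ∨
      step d ((step d)^[k] U) = (step d)^[k] U := by
  induction k with
  | zero => left; simp
  | succ k ih =>
    rw [Function.iterate_succ_apply']
    by_cases h : step d ((step d)^[k] U) = (step d)^[k] U
    · right; rw [h, h]
    · left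
      have ih := ih.resolve_right h
      have hs : (step d ((step d)^[k] U)).Sublist ((step d)^[k] U) := List.filter_sublist
      have := hs.length_le
      have h3 : (step d ((step d)^[k] U)).length ≠ ((step d)^[k] U).length :=
        fun e => h (hs.eq_of_length e)
      omega

theorem fin_fix (d : Dat) : step d (fin d) = fin d := by
  rcases fix_iter d (List.range d.1) d.1 with h | h
  · rw [List.length_range] at h
    have : (fin d).length = 0 := by unfold fin; omega
    rw [List.length_eq_zero_iff] at this
    rw [this]; rfl
  · exact h

theorem fin_good (d : Dat) (x : ℕ) (hx : x ∈ fin d) : good (d, fin d) x := by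
  rw [← fin_fix] at hx
  simp only [step, List.mem_filter, decide_eq_true_eq] at hx
  exact hx.2

theorem main_iff (G : FinGraph) : (dat G).2.2.2.2 ∈ fin (dat G) ↔
    ∃ (γ : Type) (H : PreGraph γ), PreGraph.IsHeap H ∧ PreGraph.Maps H G.toPreGraph := by
  constructor
  · intro hr
    have key : ∀ x : Fin G.n, (x : ℕ) ∈ fin (dat G) ∨ x = G.null →
        (∃ y : Fin G.n, ((y : ℕ) ∈ fin (dat G) ∨ y = G.null) ∧ G.s1 x y = true) ∧
        (∃ y : Fin G.n, ((y : ℕ) ∈ fin (dat G) ∨ y = G.null) ∧ G.s2 x y = true) := by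
      rintro x (hx | rfl)
      · obtain ⟨⟨y, hy, h1⟩, z, hz, h2⟩ := fin_good _ _ hx
        obtain ⟨_, hy', h1⟩ := (E_tab _ _ _).1 h1
        obtain ⟨_, hz', h2⟩ := (E_tab _ _ _).1 h2
        exact ⟨⟨⟨y, hy'⟩, Or.inl hy, h1⟩, ⟨⟨z, hz'⟩, Or.inl hz, h2⟩⟩
      · exact ⟨⟨_, Or.inr rfl, (G.null_s1 _).2 rfl⟩, ⟨_, Or.inr rfl, (G.null_s2 _).2 rfl⟩⟩
    have key1 : ∀ x : Fin G.n, ∃ y : Fin G.n, ((x : ℕ) ∈ fin (dat G) ∨ x = G.null) →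
        ((y : ℕ) ∈ fin (dat G) ∨ y = G.null) ∧ G.s1 x y = true := fun x => by
      by_cases h : (x : ℕ) ∈ fin (dat G) ∨ x = G.null
      · obtain ⟨y, hy⟩ := (key x h).1
        exact ⟨y, fun _ => hy⟩
      · exact ⟨x, fun h' => absurd h' h⟩
    have key2 : ∀ x : Fin G.n, ∃ y : Fin G.n, ((x : ℕ) ∈ fin (dat G) ∨ x = G.null) →
        ((y : ℕ) ∈ fin (dat G) ∨ y = G.null) ∧ G.s2 x y = true := fun x => by
      by_cases h : (x : ℕ) ∈ fin (dat G) ∨ x = G.null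
      · obtain ⟨y, hy⟩ := (key x h).2
        exact ⟨y, fun _ => hy⟩
      · exact ⟨x, fun h' => absurd h' h⟩
    choose f1 hf1 using key1
    choose f2 hf2 using key2
    let R : Fin G.n → Fin G.n → Prop := fun x y => y = f1 x ∨ y = f2 x
    let W : Set (Fin G.n) := {x | Relation.ReflTransGen R G.root x ∨ x = G.null}
    have hW : ∀ x ∈ W, (x : ℕ) ∈ fin (dat G) ∨ x = G.null := by
      rintro x (hx | hx)
      · induction hx with
        | refl => exact Or.inl hr
        | tail _ hbc ih =>
          rcases hbc with rfl | rfl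
          · exact (hf1 _ ih).1
          · exact (hf2 _ ih).1
      · exact Or.inr hx
    have hn1 : f1 G.null = G.null := (G.null_s1 _).1 (hf1 _ (Or.inr rfl)).2
    have hn2 : f2 G.null = G.null := (G.null_s2 _).1 (hf2 _ (Or.inr rfl)).2
    have hc1 : ∀ x ∈ W, f1 x ∈ W := by
      rintro x (hx | rfl)
      · exact Or.inl (hx.tail (Or.inl rfl))
      · rw [hn1]; exact Or.inr rfl
    have hc2 : ∀ x ∈ W, f2 x ∈ W := by
      rintro x (hx | rfl)
      · exact Or.inl (hx.tail (Or.inr rfl))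
      · rw [hn2]; exact Or.inr rfl
    have hnW : G.null ∈ W := Or.inr rfl
    have hrW : G.root ∈ W := Or.inl .refl
    let H : PreGraph (Fin G.n) :=
      { V := W, s1 := fun x y => x ∈ W ∧ y = f1 x, s2 := fun x y => x ∈ W ∧ y = f2 x,
        null := G.null, root := G.root }
    have hreach : ∀ x, Relation.ReflTransGen R G.root x →
        Relation.ReflTransGen H.edge G.root x := by
      intro x hx
      induction hx with
      | refl => exact .refl
      | tail hab hbc ih =>
        refine ih.tail ?_
        rcases hbc with h | h
        · exact Or.inl ⟨Or.inl hab, h⟩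
        · exact Or.inr ⟨Or.inl hab, h⟩
    refine ⟨Fin G.n, H, ⟨⟨Set.toFinite _, hnW, hrW, G.root_ne_null, ?_, ?_, ?_, ?_⟩, ?_, ?_, ?_⟩,
      id, ?_, ?_, ?_, ?_, ?_⟩
    · rintro x y ⟨hx, rfl⟩; exact ⟨hx, hc1 _ hx⟩
    · rintro x y ⟨hx, rfl⟩; exact ⟨hx, hc2 _ hx⟩
    · intro x
      exact ⟨fun h => h.2.trans hn1, fun h => ⟨hnW, h.trans hn1.symm⟩⟩
    · intro x
      exact ⟨fun h => h.2.trans hn2, fun h => ⟨hnW, h.trans hn2.symm⟩⟩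
    · intro x hx; exact ⟨f1 x, ⟨hx, rfl⟩, fun y hy => hy.2⟩
    · intro x hx; exact ⟨f2 x, ⟨hx, rfl⟩, fun y hy => hy.2⟩
    · rintro x (hx | hx) hne
      · exact hreach x hx
      · exact absurd hx hne
    · intro x _; exact Set.mem_univ _
    · rintro x y ⟨hx, rfl⟩; exact (hf1 _ (hW x hx)).2
    · rintro x y ⟨hx, rfl⟩; exact (hf2 _ (hW x hx)).2
    · intro x _; exact Iff.rfl
    · intro x _; exact Iff.rfl
  · rintro ⟨γ, H, ⟨⟨_, _, hrV, _, hV1, hV2, _, _⟩, ht1, ht2, _⟩, h, _, hs1, hs2, hroot, _⟩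
    refine sub_iter (dat G) {k | ∃ x ∈ H.V, ((h x : Fin G.n) : ℕ) = k} _ ?_ ?_ _ _ ?_
    · rintro _ ⟨x, _, rfl⟩
      exact List.mem_range.2 (h x).2
    · rintro _ ⟨x, hx, rfl⟩
      obtain ⟨y, hy, _⟩ := ht1 x hx
      obtain ⟨z, hz, _⟩ := ht2 x hx
      exact ⟨⟨_, ⟨y, (hV1 _ _ hy).2, rfl⟩, (E_tab _ _ _).2 ⟨(h x).2, (h y).2, hs1 _ _ hy⟩⟩,
        ⟨_, ⟨z, (hV2 _ _ hz).2, rfl⟩, (E_tab _ _ _).2 ⟨(h x).2, (h z).2, hs2 _ _ hz⟩⟩⟩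
    · exact ⟨H.root, hrV, congrArg Fin.val ((hroot _ hrV).2 rfl)⟩

end HeapSat

/-- Satisfiability of regular graph constraints over the class of heaps is
decidable: there is a computable (decision) function which, given (the code
of) a finite graph `G'`, decides whether there exists a heap `H` with
`H → G'`. -/
theorem satisfiability_over_heaps_decidable :
    ∃ f : ℕ → Bool, Computable f ∧ ∀ G' : FinGraph,
      (f G'.encode = true ↔
        ∃ (γ : Type) (H : PreGraph γ), PreGraph.IsHeap H ∧
          PreGraph.Maps H G'.toPreGraph) := by
  classical
  obtain ⟨g, hg⟩ := HeapSat.ans_prim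
  refine ⟨fun k => ((Encodable.decode k : Option HeapSat.Dat).map
    (fun d => decide (d.2.2.2.2 ∈ HeapSat.fin d))).getD false, ?_, ?_⟩
  · apply Primrec.to_comp
    refine Primrec.option_getD.comp (Primrec.option_map Primrec.decode ?_) (Primrec.const false)
    refine Primrec.of_eq (hg.comp Primrec.snd) ?_
    intro a
    congr!
  · intro G
    rw [← HeapSat.main_iff, HeapSat.encode_dat]
    simp
end
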